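/- Let (α,z,λ) ∈ 𝒟 and let ρ_AB be a density matrix on H_A ⊗ H_B. Let {M_k}_k be a finite family of matrices from H_A to H_{A′} with Σ_k M_k† M_k = I_A and Σ_k M_k M_k† ≤ I_{A′} (a sub-unital quantum channel in Kraus form acting on the first system), and set σ_{A′B} := Σ_k (M_k ⊗ I_B) ρ_AB (M_k ⊗ I_B)†. Then H^λ_{α,z}(A|B)_ρ ≤ H^λ_{α,z}(A′|B)_σ. -/

import Mathlib

open scoped Kronecker ComplexOrder
open Matrix


/-- Real power of a (Hermitian, in practice positive semidefinite) matrix, defined spectrally: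
positive eigenvalues are raised to the power `t`, zero (and negative) eigenvalues are sent to `0`. -/
noncomputable def matPow {n : Type*} [Fintype n] [DecidableEq n]
    (M : Matrix n n ℂ) (t : ℝ) : Matrix n n ℂ :=
  if hM : M.IsHermitian then
    (hM.eigenvectorUnitary : Matrix n n ℂ) *
      Matrix.diagonal (fun i =>
        ((if 0 < hM.eigenvalues i then (hM.eigenvalues i) ^ t else 0 : ℝ) : ℂ)) *
      (star (hM.eigenvectorUnitary : Matrix n n ℂ))
  else 0

/-- Partial trace over the first tensor factor. -/
noncomputable def ptraceFst {m n : Type*} [Fintype m] [Fintype n]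
    (M : Matrix (m × n) (m × n) ℂ) : Matrix n n ℂ :=
  Matrix.of fun j j' => ∑ i, M (i, j) (i, j')

/-- Partial trace over the second tensor factor. -/
noncomputable def ptraceSnd {m n : Type*} [Fintype m] [Fintype n]
    (M : Matrix (m × n) (m × n) ℂ) : Matrix m m ℂ :=
  Matrix.of fun i i' => ∑ j, M (i, j) (i', j)

/-- A density matrix: positive semidefinite with unit trace. -/
def IsDensity {n : Type*} [Fintype n] [DecidableEq n] (ρ : Matrix n n ℂ) : Prop :=
  ρ.PosSemidef ∧ ρ.trace = 1

/-- The trace functional `Q^λ_{α,z}(ρ_AB | σ_B)`. -/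
noncomputable def Qfun {mA mB : Type*} [Fintype mA] [DecidableEq mA]
    [Fintype mB] [DecidableEq mB] (α z lam : ℝ)
    (ρ : Matrix (mA × mB) (mA × mB) ℂ) (σ : Matrix mB mB ℂ) : ℝ :=
  (Matrix.trace (matPow
    (matPow ρ (α / (2 * z)) *
      ((1 : Matrix mA mA ℂ) ⊗ₖ
        (matPow (ptraceFst ρ) ((1 - lam) * (1 - α) / (2 * z)) *
          matPow σ (lam * (1 - α) / z) *
          matPow (ptraceFst ρ) ((1 - lam) * (1 - α) / (2 * z)))) *
      matPow ρ (α / (2 * z))) z)).re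

/-- The optimized trace functional `Q^λ_{α,z}(A|B)_ρ`. -/
noncomputable def Qopt {mA mB : Type*} [Fintype mA] [DecidableEq mA]
    [Fintype mB] [DecidableEq mB] (α z lam : ℝ)
    (ρ : Matrix (mA × mB) (mA × mB) ℂ) : ℝ :=
  if 0 ≤ lam * (1 - α) then
    sSup {x | ∃ σ : Matrix mB mB ℂ, IsDensity σ ∧ x = Qfun α z lam ρ σ}
  else
    sInf {x | ∃ σ : Matrix mB mB ℂ, IsDensity σ ∧ x = Qfun α z lam ρ σ}

/-- The conditional entropy `H^λ_{α,z}(A|B)_ρ`. -/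
noncomputable def Hcond {mA mB : Type*} [Fintype mA] [DecidableEq mA]
    [Fintype mB] [DecidableEq mB] (α z lam : ℝ)
    (ρ : Matrix (mA × mB) (mA × mB) ℂ) : ℝ :=
  (1 / (1 - α)) * Real.log (Qopt α z lam ρ)

/-- The DPI region `𝒟`. -/
def memD (α z lam : ℝ) : Prop :=
  (0 < α ∧ α < 1 ∧ 1 - z ≤ α ∧ α ≤ z ∧ 1 - z / (1 - α) ≤ lam ∧ lam ≤ 1) ∨
  (1 < α ∧ α - 1 ≤ z ∧ z ≤ α ∧ α ≤ 2 * z ∧ 1 + z / (1 - α) ≤ lam ∧ lam ≤ 1)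

/-!
A trace-preserving channel on `A` leaves `ρ_B` unchanged, so the operator on `B` inside `Qfun` is
the same for `ρ` and `σ`. Writing it as `y† y`, `K = I ⊗ y` and `p = α / z`, the functional becomes
`Tr[(K ρ^p K†)^z]`, and `K` commutes with the local channel `E`. It then suffices to show that
`A ↦ Tr[(K A^p K†)^z]` is monotone under `E`: increasing for `p ≤ 1`, `p z ≤ 1`, decreasing for
`1 ≤ p ≤ 2`, `p z ≥ 1`.

When `z` and `1` compare so that `x ↦ x ^ z` and `A ↦ A ^ p` are both concave, or both convex, this
is operator Jensen for `A ^ p` followed by trace Jensen for `x ^ z`. In the other cases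
`Tr[X ^ z]` is rewritten through the equality case of Young's inequality as `Tr[X B ^ (1 - p)]`,
which reduces the claim to the monotonicity of `Tr[K A ^ p K† B ^ (1 - p)]` (Lieb concavity, Ando
convexity) and trace Jensen for `B`. Both operator Jensen and the Lieb–Ando inequality come from the
integral representation of `a ^ p * b ^ (1 - p)` by parallel sums `a b / (a + t b)`: a parallel sum
is a minimum of a quadratic functional of a matrix `S`, and the channel maps a test matrix for the
output to one for the input.

Optimizing over `τ` preserves the pointwise inequality. The logarithm preserves it because whether
the optimum vanishes depends only on `ρ_B`: up to constants independent of `τ`, `Qfun` is the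
`z`-th power of a functional of `ρ_B` and `τ`.
-/

section ParallelSum

/-- The scaled parallel sum of `a, b ≥ 0`: up to the factor `s`, the minimum over `x` of
`a * ‖x‖ ^ 2 + s * (b * ‖c - x‖ ^ 2)` for a vector `c` of norm one. The junk value `0` of the
quotient at `a = b = 0` is the value of that minimum. Integrating over `s` gives the means
`a ^ p * b ^ (1 - p)`. -/
noncomputable def parSum (s a b : ℝ) : ℝ := a * b / (a + s * b)

variable {s a b : ℝ}

lemma mul_parSum_le (hs : 0 < s) (ha : 0 ≤ a) (hb : 0 ≤ b) (c x : ℂ) :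
    s * (‖c‖ ^ 2 * parSum s a b) ≤ a * ‖x‖ ^ 2 + s * (b * ‖c - x‖ ^ 2) := by
  rcases (add_nonneg ha (mul_nonneg hs.le hb)).eq_or_lt with h0 | h0
  · rw [parSum, ← h0, div_zero, mul_zero, mul_zero]
    positivity
  · have hc : ‖c‖ ≤ ‖x‖ + ‖c - x‖ := by simpa using norm_add_le x (c - x)
    calc s * (‖c‖ ^ 2 * parSum s a b)
        ≤ s * ((‖x‖ + ‖c - x‖) ^ 2 * parSum s a b) := by
          unfold parSum
          gcongr
      _ ≤ a * ‖x‖ ^ 2 + s * (b * ‖c - x‖ ^ 2) := by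
          rw [parSum, ← mul_div_assoc, ← mul_div_assoc, div_le_iff₀ h0]
          nlinarith [sq_nonneg (a * ‖x‖ - s * b * ‖c - x‖)]

lemma exists_eq_mul_parSum (hs : 0 < s) (ha : 0 ≤ a) (hb : 0 ≤ b) (c : ℂ) :
    ∃ x : ℂ, a * ‖x‖ ^ 2 + s * (b * ‖c - x‖ ^ 2) = s * (‖c‖ ^ 2 * parSum s a b) := by
  refine ⟨((s * b / (a + s * b) : ℝ) : ℂ) * c, ?_⟩
  have hsub : c - ((s * b / (a + s * b) : ℝ) : ℂ) * c =
      ((1 - s * b / (a + s * b) : ℝ) : ℂ) * c := by push_cast; ring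
  simp only [hsub, norm_mul, Complex.norm_real, mul_pow, Real.norm_eq_abs, sq_abs, parSum]
  rcases (add_nonneg ha (mul_nonneg hs.le hb)).eq_or_lt with h0 | h0
  · obtain rfl : b = 0 := by nlinarith
    simp
  · field_simp
    ring

lemma sum_parSum_le_sum_parSum {I I' : Type*} [Fintype I] [Fintype I']
    {a b : I → ℝ} {c : I → ℂ} {a' b' : I' → ℝ} {c' : I' → ℂ}
    (ha : ∀ i, 0 ≤ a i) (hb : ∀ i, 0 ≤ b i) (ha' : ∀ i, 0 ≤ a' i) (hb' : ∀ i, 0 ≤ b' i)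
    (htest : ∀ x' : I' → ℂ, ∃ x : I → ℂ,
      ∑ i, a i * ‖x i‖ ^ 2 ≤ ∑ i, a' i * ‖x' i‖ ^ 2 ∧
      ∑ i, b i * ‖c i - x i‖ ^ 2 ≤ ∑ i, b' i * ‖c' i - x' i‖ ^ 2)
    (hs : 0 < s) :
    ∑ i, ‖c i‖ ^ 2 * parSum s (a i) (b i) ≤ ∑ i, ‖c' i‖ ^ 2 * parSum s (a' i) (b' i) := by
  choose x' hx' using fun i => exists_eq_mul_parSum hs (ha' i) (hb' i) (c' i)
  obtain ⟨x, hax, hbx⟩ := htest x'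
  refine le_of_mul_le_mul_left ?_ hs
  calc s * ∑ i, ‖c i‖ ^ 2 * parSum s (a i) (b i)
      ≤ ∑ i, (a i * ‖x i‖ ^ 2 + s * (b i * ‖c i - x i‖ ^ 2)) := by
        rw [Finset.mul_sum]
        exact Finset.sum_le_sum fun i _ => mul_parSum_le hs (ha i) (hb i) (c i) (x i)
    _ ≤ ∑ i, (a' i * ‖x' i‖ ^ 2 + s * (b' i * ‖c' i - x' i‖ ^ 2)) := by
        simp only [Finset.sum_add_distrib, ← Finset.mul_sum]
        gcongr
    _ = s * ∑ i, ‖c' i‖ ^ 2 * parSum s (a' i) (b' i) := by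
        simp only [hx', Finset.mul_sum]

end ParallelSum

section IntegralRepresentation

open MeasureTheory Set

lemma mul_rpowIntegrand₀₁_div {p t a b : ℝ} (hp : p ∈ Ioo 0 1) (ht : 0 < t) (ha : 0 ≤ a)
    (hb : 0 ≤ b) :
    b * Real.rpowIntegrand₀₁ p t (a / b) = t ^ (p - 1) * parSum t a b := by
  rw [Real.rpowIntegrand₀₁_eq_pow_div hp ht.le (div_nonneg ha hb), parSum]
  rcases hb.eq_or_lt with rfl | hb
  · simp
  · have : 0 < a + t * b := by positivity
    have hdiv : t + a / b = (a + t * b) / b := by field_simp; ring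
    rw [hdiv]
    field_simp

lemma exists_measure_rpow_mul_rpow_one_sub {p : ℝ} (hp : p ∈ Ioo 0 1) :
    ∃ μ : Measure ℝ, ∀ a b : ℝ, 0 ≤ a → 0 ≤ b →
      IntegrableOn (fun t => t ^ (p - 1) * parSum t a b) (Ioi 0) μ ∧
      a ^ p * b ^ (1 - p) = ∫ t in Ioi 0, t ^ (p - 1) * parSum t a b ∂μ := by
  obtain ⟨μ, hμ⟩ := Real.exists_measure_rpow_eq_integral_rpowIntegrand₀₁ hp
  refine ⟨μ, fun a b ha hb => ?_⟩
  obtain ⟨hint, heq⟩ := hμ (a / b) (div_nonneg ha hb)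
  have hcongr : EqOn (fun t => b * Real.rpowIntegrand₀₁ p t (a / b))
      (fun t => t ^ (p - 1) * parSum t a b) (Ioi 0) :=
    fun t ht => mul_rpowIntegrand₀₁_div hp ht ha hb
  refine ⟨IntegrableOn.congr_fun (hint.const_mul b) hcongr measurableSet_Ioi, ?_⟩
  rw [← setIntegral_congr_fun measurableSet_Ioi hcongr, integral_const_mul, ← heq]
  rcases hb.eq_or_lt with rfl | hb
  · simp [Real.zero_rpow (sub_pos.2 hp.2).ne']
  · rw [Real.div_rpow ha hb.le, Real.rpow_sub hb, Real.rpow_one]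
    ring

lemma div_mul_parSum {t a b : ℝ} (ht : 0 < t) (ha : 0 ≤ a) (hb : 0 < b) :
    a / b * parSum t a b = a - t * parSum t a b := by
  have : 0 < a + t * b := by positivity
  rw [parSum]
  field_simp
  ring

lemma exists_measure_mul_rpow_mul_rpow_one_sub {p : ℝ} (hp : p ∈ Ioo 1 2) :
    ∃ μ : Measure ℝ, ∀ w a b : ℝ, 0 ≤ a → 0 ≤ b → (b = 0 → w * a = 0) →
      IntegrableOn (fun t => t ^ (p - 2) * (w * a - t * (w * parSum t a b))) (Ioi 0) μ ∧
      w * (a ^ p * b ^ (1 - p)) =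
        ∫ t in Ioi 0, t ^ (p - 2) * (w * a - t * (w * parSum t a b)) ∂μ := by
  obtain ⟨μ, hμ⟩ := exists_measure_rpow_mul_rpow_one_sub
    (p := p - 1) ⟨by linarith [hp.1], by linarith [hp.2]⟩
  refine ⟨μ, fun w a b ha hb hsupp => ?_⟩
  rcases hb.eq_or_lt with rfl | hb
  · have hzero : ∀ t, t ^ (p - 2) * (w * a - t * (w * parSum t a 0)) = 0 := fun t => by
      simp [parSum, hsupp rfl]
    simp [hzero, Real.zero_rpow (sub_neg.2 hp.1).ne]
  · obtain ⟨hint, heq⟩ := hμ a b ha hb.le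
    have hcongr : EqOn (fun t => w * (a / b) * (t ^ (p - 1 - 1) * parSum t a b))
        (fun t => t ^ (p - 2) * (w * a - t * (w * parSum t a b))) (Ioi 0) := fun t ht => by
      have hpar := div_mul_parSum ht ha hb
      have hexp : p - 1 - 1 = p - 2 := by ring
      simp only [hexp]
      linear_combination w * t ^ (p - 2) * hpar
    refine ⟨IntegrableOn.congr_fun (hint.const_mul _) hcongr measurableSet_Ioi, ?_⟩
    rw [← setIntegral_congr_fun measurableSet_Ioi hcongr, integral_const_mul, ← heq]
    have hap : a ^ p = a * a ^ (p - 1) := by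
      rcases ha.eq_or_lt with rfl | ha
      · simp [Real.zero_rpow (zero_lt_one.trans hp.1).ne']
      · rw [Real.rpow_sub_one ha.ne']
        field_simp
    have hbp : b ^ (1 - (p - 1)) = b * b ^ (1 - p) := by
      rw [← Real.rpow_one_add' hb.le (by linarith [hp.2])]
      congr 1
      ring
    rw [hap, hbp]
    field_simp

variable {I I' : Type*} [Fintype I] [Fintype I'] {a b w : I → ℝ} {a' b' w' : I' → ℝ} {p : ℝ}

lemma sum_rpow_mul_rpow_le_of_parSum_le
    (ha : ∀ i, 0 ≤ a i) (hb : ∀ i, 0 ≤ b i) (ha' : ∀ i, 0 ≤ a' i) (hb' : ∀ i, 0 ≤ b' i)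
    (hpar : ∀ s, 0 < s →
      ∑ i, w i * parSum s (a i) (b i) ≤ ∑ i, w' i * parSum s (a' i) (b' i))
    (hp : p ∈ Ioo 0 1) :
    ∑ i, w i * (a i ^ p * b i ^ (1 - p)) ≤ ∑ i, w' i * (a' i ^ p * b' i ^ (1 - p)) := by
  obtain ⟨μ, hμ⟩ := exists_measure_rpow_mul_rpow_one_sub hp
  have hint : ∀ i ∈ Finset.univ, IntegrableOn
      (fun t => w i * (t ^ (p - 1) * parSum t (a i) (b i))) (Ioi 0) μ :=
    fun i _ => (hμ _ _ (ha i) (hb i)).1.const_mul _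
  have hint' : ∀ i ∈ Finset.univ, IntegrableOn
      (fun t => w' i * (t ^ (p - 1) * parSum t (a' i) (b' i))) (Ioi 0) μ :=
    fun i _ => (hμ _ _ (ha' i) (hb' i)).1.const_mul _
  simp only [fun i => (hμ _ _ (ha i) (hb i)).2, fun i => (hμ _ _ (ha' i) (hb' i)).2,
    ← integral_const_mul]
  rw [← integral_finsetSum _ hint, ← integral_finsetSum _ hint']
  refine setIntegral_mono_on (integrable_finsetSum _ hint) (integrable_finsetSum _ hint')
    measurableSet_Ioi fun t (ht : 0 < t) => ?_
  simp only [mul_left_comm _ (t ^ (p - 1)), ← Finset.mul_sum]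
  exact mul_le_mul_of_nonneg_left (hpar t ht) (by positivity)

lemma sum_rpow_mul_rpow_le_of_parSum_le_of_lt_two
    (ha : ∀ i, 0 ≤ a i) (hb : ∀ i, 0 ≤ b i) (ha' : ∀ i, 0 ≤ a' i) (hb' : ∀ i, 0 ≤ b' i)
    (hpar : ∀ s, 0 < s →
      ∑ i, w i * parSum s (a i) (b i) ≤ ∑ i, w' i * parSum s (a' i) (b' i))
    (hlin : ∑ i, w' i * a' i ≤ ∑ i, w i * a i)
    (hsupp : ∀ i, b i = 0 → w i * a i = 0) (hsupp' : ∀ i, b' i = 0 → w' i * a' i = 0)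
    (hp : p ∈ Ioo 1 2) :
    ∑ i, w' i * (a' i ^ p * b' i ^ (1 - p)) ≤ ∑ i, w i * (a i ^ p * b i ^ (1 - p)) := by
  obtain ⟨μ, hμ⟩ := exists_measure_mul_rpow_mul_rpow_one_sub hp
  have hμ₁ := fun i => hμ (w i) _ _ (ha i) (hb i) (hsupp i)
  have hμ₂ := fun i => hμ (w' i) _ _ (ha' i) (hb' i) (hsupp' i)
  simp only [fun i => (hμ₁ i).2, fun i => (hμ₂ i).2]
  rw [← integral_finsetSum _ fun i _ => (hμ₁ i).1, ← integral_finsetSum _ fun i _ => (hμ₂ i).1]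
  refine setIntegral_mono_on (integrable_finsetSum _ fun i _ => (hμ₂ i).1)
    (integrable_finsetSum _ fun i _ => (hμ₁ i).1) measurableSet_Ioi fun t (ht : 0 < t) => ?_
  simp only [← Finset.mul_sum, Finset.sum_sub_distrib]
  have := hpar t ht
  gcongr

lemma tendsto_sum_rpow_mul_rpow_one_sub_two (a b w : I → ℝ) :
    Filter.Tendsto (fun p : ℝ => ∑ i, w i * (a i ^ p * b i ^ (1 - p)))
      (nhdsWithin 2 (Iio 2)) (nhds (∑ i, w i * (a i ^ (2 : ℝ) * b i ^ (1 - (2 : ℝ))))) := by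
  refine tendsto_finsetSum _ fun i _ => ?_
  have hcont_a : ContinuousAt (fun p : ℝ => a i ^ p) 2 := Real.continuousAt_const_rpow' two_ne_zero
  have hcont_b : ContinuousAt (fun p : ℝ => b i ^ (1 - p)) 2 :=
    ContinuousAt.comp (g := fun y => b i ^ y) (f := fun p : ℝ => 1 - p)
      (Real.continuousAt_const_rpow' (by norm_num)) (by fun_prop)
  exact ((hcont_a.mul hcont_b).tendsto.mono_left nhdsWithin_le_nhds).const_mul _

lemma sum_rpow_mul_rpow_le_of_parSum_le_of_one_lt
    (ha : ∀ i, 0 ≤ a i) (hb : ∀ i, 0 ≤ b i) (ha' : ∀ i, 0 ≤ a' i) (hb' : ∀ i, 0 ≤ b' i)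
    (hpar : ∀ s, 0 < s →
      ∑ i, w i * parSum s (a i) (b i) ≤ ∑ i, w' i * parSum s (a' i) (b' i))
    (hlin : ∑ i, w' i * a' i ≤ ∑ i, w i * a i)
    (hsupp : ∀ i, b i = 0 → w i * a i = 0) (hsupp' : ∀ i, b' i = 0 → w' i * a' i = 0)
    (hp : p ∈ Ioc 1 2) :
    ∑ i, w' i * (a' i ^ p * b' i ^ (1 - p)) ≤ ∑ i, w i * (a i ^ p * b i ^ (1 - p)) := by
  have hlt : ∀ q ∈ Ioo (1 : ℝ) 2, ∑ i, w' i * (a' i ^ q * b' i ^ (1 - q)) ≤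
      ∑ i, w i * (a i ^ q * b i ^ (1 - q)) := fun q hq =>
    sum_rpow_mul_rpow_le_of_parSum_le_of_lt_two ha hb ha' hb' hpar hlin hsupp hsupp' hq
  rcases hp.2.eq_or_lt with rfl | h2
  · refine le_of_tendsto_of_tendsto (tendsto_sum_rpow_mul_rpow_one_sub_two a' b' w')
      (tendsto_sum_rpow_mul_rpow_one_sub_two a b w) ?_
    filter_upwards [Ioo_mem_nhdsLT one_lt_two] with q hq using hlt q hq
  · exact hlt p ⟨hp.1, h2⟩

end IntegralRepresentation

open scoped MatrixOrder

section SpectralSums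

variable {n m : Type*} [Fintype n] [DecidableEq n] [Fintype m] [DecidableEq m]
  {A : Matrix n n ℂ} {B : Matrix m m ℂ}

lemma cfc_eq_mul_diagonal_mul (hA : A.IsHermitian) (f : ℝ → ℝ) :
    cfc f A = (hA.eigenvectorUnitary : Matrix n n ℂ) *
      diagonal (fun i => (f (hA.eigenvalues i) : ℂ)) * (hA.eigenvectorUnitary : Matrix n n ℂ)ᴴ := by
  rw [hA.cfc_eq, IsHermitian.cfc, Unitary.conjStarAlgAut_apply]
  rfl

lemma conjTranspose_mul_diagonal_mul_apply_self {l : Type*} (W : Matrix n l ℂ) (d : n → ℝ)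
    (j : l) :
    (Wᴴ * diagonal (fun i => (d i : ℂ)) * W) j j = ((∑ i, ‖W i j‖ ^ 2 * d i : ℝ) : ℂ) := by
  rw [Matrix.mul_assoc, Matrix.mul_apply, Complex.ofReal_sum]
  refine Finset.sum_congr rfl fun i _ => ?_
  rw [diagonal_mul, conjTranspose_apply, Complex.star_def]
  push_cast
  rw [← Complex.conj_mul' (W i j)]
  ring

/-- The matrix of `K` with respect to the eigenbases of the Hermitian matrices `A` (codomain) and
`B` (domain). -/
noncomputable def eigenCoeff (hA : A.IsHermitian) (hB : B.IsHermitian) (K : Matrix n m ℂ) :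
    Matrix n m ℂ :=
  (hA.eigenvectorUnitary : Matrix n n ℂ)ᴴ * K * (hB.eigenvectorUnitary : Matrix m m ℂ)

lemma eigenCoeff_sub (hA : A.IsHermitian) (hB : B.IsHermitian) (K L : Matrix n m ℂ) :
    eigenCoeff hA hB (K - L) = eigenCoeff hA hB K - eigenCoeff hA hB L := by
  simp only [eigenCoeff, Matrix.mul_sub, Matrix.sub_mul]

lemma eigenCoeff_surjective (hA : A.IsHermitian) (hB : B.IsHermitian) :
    Function.Surjective (eigenCoeff hA hB) := by
  intro X
  refine ⟨(hA.eigenvectorUnitary : Matrix n n ℂ) * X * (hB.eigenvectorUnitary : Matrix m m ℂ)ᴴ, ?_⟩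
  have hU := Unitary.star_mul_self_of_mem hA.eigenvectorUnitary.2
  have hV := Unitary.star_mul_self_of_mem hB.eigenvectorUnitary.2
  rw [star_eq_conjTranspose] at hU hV
  rw [eigenCoeff, Matrix.mul_assoc, Matrix.mul_assoc, hV, Matrix.mul_one, ← Matrix.mul_assoc, hU,
    Matrix.one_mul]

lemma trace_conjTranspose_mul_cfc_mul_mul_cfc (hA : A.IsHermitian) (hB : B.IsHermitian)
    (K : Matrix n m ℂ) (f g : ℝ → ℝ) :
    (Kᴴ * cfc f A * K * cfc g B).trace =
      ((∑ q : n × m, ‖eigenCoeff hA hB K q.1 q.2‖ ^ 2 *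
          (f (hA.eigenvalues q.1) * g (hB.eigenvalues q.2)) : ℝ) : ℂ) := by
  set F : Matrix n n ℂ := diagonal fun i => (f (hA.eigenvalues i) : ℂ) with hF
  set G : Matrix m m ℂ := diagonal fun j => (g (hB.eigenvalues j) : ℂ) with hG
  have hcyclic : (Kᴴ * cfc f A * K * cfc g B).trace =
      ((eigenCoeff hA hB K)ᴴ * F * eigenCoeff hA hB K * G).trace := by
    rw [cfc_eq_mul_diagonal_mul hA, cfc_eq_mul_diagonal_mul hB, ← hF, ← hG, ← Matrix.mul_assoc,
      trace_mul_comm]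
    simp only [eigenCoeff, conjTranspose_mul, conjTranspose_conjTranspose, Matrix.mul_assoc]
  rw [hcyclic, Fintype.sum_prod_type, Finset.sum_comm, Matrix.trace, Complex.ofReal_sum]
  refine Finset.sum_congr rfl fun j _ => ?_
  rw [diag_apply, hG, mul_diagonal, conjTranspose_mul_diagonal_mul_apply_self,
    ← Complex.ofReal_mul, Finset.sum_mul]
  simp only [mul_assoc]

lemma trace_conjTranspose_mul_mul_eq_sum (hA : A.IsHermitian) (hB : B.IsHermitian)
    (K : Matrix n m ℂ) :
    (Kᴴ * A * K).trace =
      ((∑ q : n × m, ‖eigenCoeff hA hB K q.1 q.2‖ ^ 2 * hA.eigenvalues q.1 : ℝ) : ℂ) := by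
  have h := trace_conjTranspose_mul_cfc_mul_mul_cfc hA hB K id fun _ => 1
  rw [cfc_id ℝ A hA.isSelfAdjoint, cfc_const_one ℝ B hB.isSelfAdjoint, Matrix.mul_one] at h
  simpa only [id_eq, mul_one] using h

lemma trace_mul_mul_conjTranspose_eq_sum (hA : A.IsHermitian) (hB : B.IsHermitian)
    (K : Matrix n m ℂ) :
    (K * B * Kᴴ).trace =
      ((∑ q : n × m, ‖eigenCoeff hA hB K q.1 q.2‖ ^ 2 * hB.eigenvalues q.2 : ℝ) : ℂ) := by
  have h := trace_conjTranspose_mul_cfc_mul_mul_cfc hA hB K (fun _ => 1) id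
  rw [cfc_id ℝ B hB.isSelfAdjoint, cfc_const_one ℝ A hA.isSelfAdjoint, Matrix.mul_one,
    ← trace_mul_cycle K B Kᴴ] at h
  simpa only [id_eq, one_mul] using h

lemma eigenvalues_mul_eigenCoeff_eq_zero (hA : A.IsHermitian) (hB : B.IsHermitian)
    {K : Matrix n m ℂ} (hsupp : ∀ v, B *ᵥ v = 0 → A *ᵥ (K *ᵥ v) = 0) (i : n) {j : m}
    (hj : hB.eigenvalues j = 0) : (hA.eigenvalues i : ℂ) * eigenCoeff hA hB K i j = 0 := by
  have hcoeff : eigenCoeff hA hB K i j =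
      star ⇑(hA.eigenvectorBasis i) ⬝ᵥ K *ᵥ ⇑(hB.eigenvectorBasis j) := by
    rw [eigenCoeff, Matrix.mul_assoc]
    rfl
  have hB0 : B *ᵥ ⇑(hB.eigenvectorBasis j) = 0 := by
    rw [hB.mulVec_eigenvectorBasis, hj, zero_smul]
  have hstar : (hA.eigenvalues i : ℂ) • star ⇑(hA.eigenvectorBasis i) =
      star ⇑(hA.eigenvectorBasis i) ᵥ* A := by
    calc (hA.eigenvalues i : ℂ) • star ⇑(hA.eigenvectorBasis i)
        = star (A *ᵥ ⇑(hA.eigenvectorBasis i)) := by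
          ext k
          simp [hA.mulVec_eigenvectorBasis]
      _ = star ⇑(hA.eigenvectorBasis i) ᵥ* A := by rw [star_mulVec, hA.eq]
  rw [hcoeff, ← smul_eq_mul, ← smul_dotProduct, hstar, ← dotProduct_mulVec, hsupp _ hB0,
    dotProduct_zero]

lemma star_dotProduct_cfc_mulVec (hA : A.IsHermitian) (f : ℝ → ℝ) (v : n → ℂ) :
    star v ⬝ᵥ cfc f A *ᵥ v = ((∑ i, ‖((hA.eigenvectorUnitary : Matrix n n ℂ)ᴴ *ᵥ v) i‖ ^ 2 *
      f (hA.eigenvalues i) : ℝ) : ℂ) := by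
  rw [cfc_eq_mul_diagonal_mul hA]
  set U := (hA.eigenvectorUnitary : Matrix n n ℂ)
  have hstar : star v ᵥ* U = star (Uᴴ *ᵥ v) := by
    rw [star_mulVec, conjTranspose_conjTranspose]
  rw [Matrix.mul_assoc, ← mulVec_mulVec, ← mulVec_mulVec, dotProduct_mulVec, hstar, dotProduct,
    Complex.ofReal_sum]
  refine Finset.sum_congr rfl fun i _ => ?_
  rw [mulVec_diagonal, Pi.star_apply, Complex.star_def]
  push_cast
  rw [← Complex.conj_mul']
  ring

lemma trace_cfc (hA : A.IsHermitian) (f : ℝ → ℝ) :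
    (cfc f A).trace = ((∑ i, f (hA.eigenvalues i) : ℝ) : ℂ) := by
  rw [cfc_eq_mul_diagonal_mul hA, trace_mul_comm, ← Matrix.mul_assoc, ← star_eq_conjTranspose,
    Unitary.coe_star_mul_self, Matrix.one_mul, trace_diagonal, Complex.ofReal_sum]

lemma trace_eq_sum_star_eigenvectorBasis_dotProduct (hA : A.IsHermitian) (C : Matrix n n ℂ) :
    C.trace = ∑ j, star ⇑(hA.eigenvectorBasis j) ⬝ᵥ C *ᵥ ⇑(hA.eigenvectorBasis j) := by
  calc C.trace = ((hA.eigenvectorUnitary : Matrix n n ℂ)ᴴ *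
        (C * (hA.eigenvectorUnitary : Matrix n n ℂ))).trace := by
        rw [trace_mul_comm, Matrix.mul_assoc, ← star_eq_conjTranspose,
          Unitary.mul_star_self_of_mem hA.eigenvectorUnitary.2, Matrix.mul_one]
    _ = ∑ j, star ⇑(hA.eigenvectorBasis j) ⬝ᵥ C *ᵥ ⇑(hA.eigenvectorBasis j) := rfl

lemma star_eigenvectorBasis_dotProduct_self (hA : A.IsHermitian) (j : n) :
    star ⇑(hA.eigenvectorBasis j) ⬝ᵥ ⇑(hA.eigenvectorBasis j) = 1 := by
  rw [dotProduct_comm, ← EuclideanSpace.inner_eq_star_dotProduct, inner_self_eq_norm_sq_to_K,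
    hA.eigenvectorBasis.orthonormal.1 j]
  simp

lemma trace_cfc_eq_of_charpoly_eq {C : Matrix n n ℂ} (hA : A.IsHermitian) (hC : C.IsHermitian)
    (h : A.charpoly = C.charpoly) (f : ℝ → ℝ) : (cfc f A).trace = (cfc f C).trace := by
  have hroots := congrArg (fun p => (p.roots.map fun x : ℂ => (f x.re : ℂ)).sum) h
  simp only [hA.roots_charpoly_eq_eigenvalues, hC.roots_charpoly_eq_eigenvalues,
    Multiset.map_map] at hroots
  rw [trace_cfc hA, trace_cfc hC, Complex.ofReal_sum, Complex.ofReal_sum]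
  exact hroots

end SpectralSums

section LoewnerOrder

variable {n : Type*} [Fintype n] {A C : Matrix n n ℂ}

lemma re_trace_nonneg (hA : A.PosSemidef) : 0 ≤ A.trace.re :=
  (Complex.le_def.1 hA.trace_nonneg).1

lemma re_trace_mono (h : A ≤ C) : A.trace.re ≤ C.trace.re := by
  have h0 := re_trace_nonneg (le_iff.1 h)
  rwa [trace_sub, Complex.sub_re, sub_nonneg] at h0

lemma re_star_dotProduct_mulVec_nonneg (hA : A.PosSemidef) (v : n → ℂ) :
    0 ≤ (star v ⬝ᵥ A *ᵥ v).re :=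
  (Complex.le_def.1 (hA.dotProduct_mulVec_nonneg v)).1

lemma re_star_dotProduct_mulVec_mono (h : A ≤ C) (v : n → ℂ) :
    (star v ⬝ᵥ A *ᵥ v).re ≤ (star v ⬝ᵥ C *ᵥ v).re := by
  have h0 := (Complex.le_def.1 ((le_iff.1 h).dotProduct_mulVec_nonneg v)).1
  rwa [sub_mulVec, dotProduct_sub, Complex.sub_re, Complex.zero_re, sub_nonneg] at h0

lemma le_of_re_star_dotProduct_mulVec_le (hA : A.IsHermitian) (hC : C.IsHermitian)
    (h : ∀ v : n → ℂ, (star v ⬝ᵥ A *ᵥ v).re ≤ (star v ⬝ᵥ C *ᵥ v).re) : A ≤ C := by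
  refine le_iff.2 (.of_dotProduct_mulVec_nonneg (hC.sub hA) fun v => ?_)
  rw [sub_mulVec, dotProduct_sub, sub_nonneg, Complex.le_def]
  exact ⟨h v, (hA.im_star_dotProduct_mulVec_self v).trans
    (hC.im_star_dotProduct_mulVec_self v).symm⟩

lemma re_trace_mul_mono {X Y : Matrix n n ℂ} (hA : A.PosSemidef) (h : X ≤ Y) :
    (A * X).trace.re ≤ (A * Y).trace.re := by
  classical
  obtain ⟨R, rfl⟩ := CStarAlgebra.nonneg_iff_eq_star_mul_self.1 hA.nonneg
  have hconj := re_trace_nonneg ((le_iff.1 h).mul_mul_conjTranspose_same R)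
  rwa [trace_mul_cycle, Matrix.mul_sub, trace_sub, Complex.sub_re, sub_nonneg] at hconj

end LoewnerOrder

section MatrixPower

/-- The scalar function behind `matPow`: `x ^ t` for `x > 0`, and `0` otherwise. It differs from
`x ^ t` on `x ≥ 0` only at `x = t = 0`, where it makes `matPow A 0` the support projection. -/
noncomputable def truncPow (t x : ℝ) : ℝ := if 0 < x then x ^ t else 0

lemma truncPow_of_pos {x : ℝ} (hx : 0 < x) (t : ℝ) : truncPow t x = x ^ t := if_pos hx

lemma truncPow_zero_right (t : ℝ) : truncPow t 0 = 0 := if_neg (lt_irrefl 0)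

lemma truncPow_of_nonneg {t x : ℝ} (ht : t ≠ 0) (hx : 0 ≤ x) : truncPow t x = x ^ t := by
  rcases hx.eq_or_lt with rfl | hx
  · rw [truncPow_zero_right, Real.zero_rpow ht]
  · exact truncPow_of_pos hx t

lemma truncPow_nonneg (t x : ℝ) : 0 ≤ truncPow t x := by
  unfold truncPow
  split_ifs <;> positivity

lemma truncPow_mul_truncPow (s t x : ℝ) : truncPow s x * truncPow t x = truncPow (s + t) x := by
  unfold truncPow
  split_ifs with hx
  · rw [Real.rpow_add hx]
  · exact zero_mul 0

lemma truncPow_truncPow (s t x : ℝ) : truncPow t (truncPow s x) = truncPow (s * t) x := by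
  by_cases hx : 0 < x
  · rw [truncPow_of_pos hx, truncPow_of_pos (by positivity), truncPow_of_pos hx,
      Real.rpow_mul hx.le]
  · simp [truncPow, hx]

variable {n : Type*} [Fintype n] [DecidableEq n] {A C : Matrix n n ℂ}

lemma continuousOn_spectrum_real (A : Matrix n n ℂ) (f : ℝ → ℝ) :
    ContinuousOn f (spectrum ℝ A) := A.finite_real_spectrum.continuousOn f

lemma spectrum_nonneg_of_posSemidef (hA : A.PosSemidef) {x : ℝ} (hx : x ∈ spectrum ℝ A) :
    0 ≤ x := spectrum_nonneg_of_nonneg hA.nonneg hx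

lemma matPow_eq_cfc (A : Matrix n n ℂ) (t : ℝ) : matPow A t = cfc (truncPow t) A := by
  by_cases hA : A.IsHermitian
  · rw [matPow, dif_pos hA, cfc_eq_mul_diagonal_mul hA]
    rfl
  · rw [matPow, dif_neg hA]
    exact (cfc_apply_of_not_predicate (R := ℝ) (p := IsSelfAdjoint) A hA).symm

lemma matPow_eq_cfc_rpow (hA : A.PosSemidef) {t : ℝ} (ht : t ≠ 0) :
    matPow A t = cfc (fun x : ℝ => x ^ t) A := by
  rw [matPow_eq_cfc]
  exact cfc_congr fun x hx => truncPow_of_nonneg ht (spectrum_nonneg_of_posSemidef hA hx)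

lemma matPow_posSemidef (A : Matrix n n ℂ) (t : ℝ) : (matPow A t).PosSemidef := by
  rw [matPow_eq_cfc, ← nonneg_iff_posSemidef]
  exact cfc_nonneg fun x _ => truncPow_nonneg t x

lemma matPow_isHermitian (A : Matrix n n ℂ) (t : ℝ) : (matPow A t).IsHermitian :=
  (matPow_posSemidef A t).isHermitian

lemma matPow_mul_matPow (A : Matrix n n ℂ) (s t : ℝ) :
    matPow A s * matPow A t = matPow A (s + t) := by
  simp only [matPow_eq_cfc, ← cfc_mul _ _ A (continuousOn_spectrum_real A _)
    (continuousOn_spectrum_real A _), truncPow_mul_truncPow]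

lemma matPow_matPow (hA : A.IsHermitian) (s t : ℝ) :
    matPow (matPow A s) t = matPow A (s * t) := by
  simp only [matPow_eq_cfc]
  rw [← cfc_comp (truncPow t) (truncPow s) A (show IsSelfAdjoint A from hA)
    ((A.finite_real_spectrum.image _).continuousOn _) (continuousOn_spectrum_real A _)]
  exact cfc_congr fun x _ => truncPow_truncPow s t x

lemma matPow_one (hA : A.PosSemidef) : matPow A 1 = A := by
  rw [matPow_eq_cfc_rpow hA one_ne_zero]
  simp only [Real.rpow_one]
  exact cfc_id' ℝ A hA.isHermitian

lemma matPow_one_left (t : ℝ) : matPow (1 : Matrix n n ℂ) t = 1 := by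
  rw [matPow_eq_cfc, cfc_apply_one, truncPow_of_pos one_pos, Real.one_rpow, map_one]

lemma matPow_mulVec_eq_zero_iff (hA : A.PosSemidef) (t : ℝ) (v : n → ℂ) :
    matPow A t *ᵥ v = 0 ↔ A *ᵥ v = 0 := by
  constructor <;> intro hv
  · rw [← matPow_one hA, ← sub_add_cancel 1 t, ← matPow_mul_matPow, ← mulVec_mulVec, hv,
      mulVec_zero]
  · rw [← sub_add_cancel t 1, ← matPow_mul_matPow, ← mulVec_mulVec, matPow_one hA, hv, mulVec_zero]

lemma trace_matPow_conjTranspose_mul_self_comm (W : Matrix n n ℂ) (t : ℝ) :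
    (matPow (Wᴴ * W) t).trace = (matPow (W * Wᴴ) t).trace := by
  simp only [matPow_eq_cfc]
  exact trace_cfc_eq_of_charpoly_eq (isHermitian_conjTranspose_mul_self W)
    (isHermitian_mul_conjTranspose_self W) (charpoly_mul_comm Wᴴ W) _

end MatrixPower

section TestMatrices

variable {n m n' m' : Type*} [Fintype n] [DecidableEq n] [Fintype m] [DecidableEq m]
  [Fintype n'] [DecidableEq n'] [Fintype m'] [DecidableEq m']
  {A : Matrix n n ℂ} {B : Matrix m m ℂ} {A' : Matrix n' n' ℂ} {B' : Matrix m' m' ℂ}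
  {K : Matrix n m ℂ} {K' : Matrix n' m' ℂ} {p : ℝ}

lemma sum_parSum_eigenvalues_le (hA : A.PosSemidef) (hB : B.PosSemidef) (hA' : A'.PosSemidef)
    (hB' : B'.PosSemidef)
    (htest : ∀ S' : Matrix n' m' ℂ, ∃ S : Matrix n m ℂ,
      (Sᴴ * A * S).trace.re ≤ (S'ᴴ * A' * S').trace.re ∧
      ((K - S) * B * (K - S)ᴴ).trace.re ≤ ((K' - S') * B' * (K' - S')ᴴ).trace.re)
    {s : ℝ} (hs : 0 < s) :
    ∑ q : n × m, ‖eigenCoeff hA.1 hB.1 K q.1 q.2‖ ^ 2 *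
        parSum s (hA.1.eigenvalues q.1) (hB.1.eigenvalues q.2) ≤
      ∑ q : n' × m', ‖eigenCoeff hA'.1 hB'.1 K' q.1 q.2‖ ^ 2 *
        parSum s (hA'.1.eigenvalues q.1) (hB'.1.eigenvalues q.2) := by
  refine sum_parSum_le_sum_parSum (fun q => hA.eigenvalues_nonneg q.1)
    (fun q => hB.eigenvalues_nonneg q.2) (fun q => hA'.eigenvalues_nonneg q.1)
    (fun q => hB'.eigenvalues_nonneg q.2) (fun x' => ?_) hs
  obtain ⟨S', hS'⟩ := eigenCoeff_surjective hA'.1 hB'.1 (Matrix.of fun i j => x' (i, j))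
  obtain ⟨S, hSA, hSB⟩ := htest S'
  rw [trace_conjTranspose_mul_mul_eq_sum hA.1 hB.1, trace_conjTranspose_mul_mul_eq_sum hA'.1 hB'.1,
    Complex.ofReal_re, Complex.ofReal_re, hS'] at hSA
  rw [trace_mul_mul_conjTranspose_eq_sum hA.1 hB.1, trace_mul_mul_conjTranspose_eq_sum hA'.1 hB'.1,
    Complex.ofReal_re, Complex.ofReal_re, eigenCoeff_sub, eigenCoeff_sub, hS'] at hSB
  refine ⟨fun q => eigenCoeff hA.1 hB.1 S q.1 q.2, ?_, ?_⟩
  · simpa only [mul_comm (_ ^ 2), of_apply] using hSA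
  · simpa only [mul_comm (_ ^ 2), Matrix.sub_apply, of_apply] using hSB

lemma re_trace_mul_matPow_mul_matPow_le (hA : A.PosSemidef) (hB : B.PosSemidef)
    (hA' : A'.PosSemidef) (hB' : B'.PosSemidef)
    (htest : ∀ S' : Matrix n' m' ℂ, ∃ S : Matrix n m ℂ,
      (Sᴴ * A * S).trace.re ≤ (S'ᴴ * A' * S').trace.re ∧
      ((K - S) * B * (K - S)ᴴ).trace.re ≤ ((K' - S') * B' * (K' - S')ᴴ).trace.re)
    (hp : p ∈ Set.Ioo 0 1) :
    (Kᴴ * matPow A p * K * matPow B (1 - p)).trace.re ≤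
      (K'ᴴ * matPow A' p * K' * matPow B' (1 - p)).trace.re := by
  have hp0 : p ≠ 0 := hp.1.ne'
  have hp1 : 1 - p ≠ 0 := (sub_pos.2 hp.2).ne'
  rw [matPow_eq_cfc_rpow hA hp0, matPow_eq_cfc_rpow hB hp1, matPow_eq_cfc_rpow hA' hp0,
    matPow_eq_cfc_rpow hB' hp1, trace_conjTranspose_mul_cfc_mul_mul_cfc hA.1 hB.1,
    trace_conjTranspose_mul_cfc_mul_mul_cfc hA'.1 hB'.1, Complex.ofReal_re, Complex.ofReal_re]
  exact sum_rpow_mul_rpow_le_of_parSum_le (fun q => hA.eigenvalues_nonneg q.1)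
    (fun q => hB.eigenvalues_nonneg q.2) (fun q => hA'.eigenvalues_nonneg q.1)
    (fun q => hB'.eigenvalues_nonneg q.2)
    (fun s hs => sum_parSum_eigenvalues_le hA hB hA' hB' htest hs) hp

lemma sq_norm_eigenCoeff_mul_eigenvalues_eq_zero (hA : A.IsHermitian) (hB : B.IsHermitian)
    (hsupp : ∀ v, B *ᵥ v = 0 → A *ᵥ (K *ᵥ v) = 0) (i : n) {j : m}
    (hj : hB.eigenvalues j = 0) : ‖eigenCoeff hA hB K i j‖ ^ 2 * hA.eigenvalues i = 0 := by
  rcases mul_eq_zero.1 (eigenvalues_mul_eigenCoeff_eq_zero hA hB hsupp i hj) with h | h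
  · rw [Complex.ofReal_eq_zero.1 h, mul_zero]
  · rw [h, norm_zero, zero_pow two_ne_zero, zero_mul]

lemma re_trace_mul_matPow_mul_matPow_le_of_one_lt (hA : A.PosSemidef) (hB : B.PosSemidef)
    (hA' : A'.PosSemidef) (hB' : B'.PosSemidef)
    (htest : ∀ S' : Matrix n' m' ℂ, ∃ S : Matrix n m ℂ,
      (Sᴴ * A * S).trace.re ≤ (S'ᴴ * A' * S').trace.re ∧
      ((K - S) * B * (K - S)ᴴ).trace.re ≤ ((K' - S') * B' * (K' - S')ᴴ).trace.re)
    (hlin : (K'ᴴ * A' * K').trace.re ≤ (Kᴴ * A * K).trace.re)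
    (hsupp : ∀ v, B *ᵥ v = 0 → A *ᵥ (K *ᵥ v) = 0)
    (hsupp' : ∀ v, B' *ᵥ v = 0 → A' *ᵥ (K' *ᵥ v) = 0) (hp : p ∈ Set.Ioc 1 2) :
    (K'ᴴ * matPow A' p * K' * matPow B' (1 - p)).trace.re ≤
      (Kᴴ * matPow A p * K * matPow B (1 - p)).trace.re := by
  have hp0 : p ≠ 0 := (zero_lt_one.trans hp.1).ne'
  have hp1 : 1 - p ≠ 0 := (sub_neg.2 hp.1).ne
  rw [trace_conjTranspose_mul_mul_eq_sum hA.1 hB.1, trace_conjTranspose_mul_mul_eq_sum hA'.1 hB'.1,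
    Complex.ofReal_re, Complex.ofReal_re] at hlin
  rw [matPow_eq_cfc_rpow hA hp0, matPow_eq_cfc_rpow hB hp1, matPow_eq_cfc_rpow hA' hp0,
    matPow_eq_cfc_rpow hB' hp1, trace_conjTranspose_mul_cfc_mul_mul_cfc hA.1 hB.1,
    trace_conjTranspose_mul_cfc_mul_mul_cfc hA'.1 hB'.1, Complex.ofReal_re, Complex.ofReal_re]
  exact sum_rpow_mul_rpow_le_of_parSum_le_of_one_lt (fun q => hA.eigenvalues_nonneg q.1)
    (fun q => hB.eigenvalues_nonneg q.2) (fun q => hA'.eigenvalues_nonneg q.1)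
    (fun q => hB'.eigenvalues_nonneg q.2)
    (fun s hs => sum_parSum_eigenvalues_le hA hB hA' hB' htest hs) hlin
    (fun q hq => sq_norm_eigenCoeff_mul_eigenvalues_eq_zero hA.1 hB.1 hsupp q.1 hq)
    (fun q hq => sq_norm_eigenCoeff_mul_eigenvalues_eq_zero hA'.1 hB'.1 hsupp' q.1 hq) hp

end TestMatrices

section KrausMap

variable {n n' κ : Type*} [Fintype n'] [Fintype κ]

/-- The completely positive map with Kraus operators `N k`; a channel when it also preserves the
trace. -/
def krausMap [Fintype n] (N : κ → Matrix n' n ℂ) (B : Matrix n n ℂ) : Matrix n' n' ℂ :=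
  ∑ k, N k * B * (N k)ᴴ

/-- The adjoint of `krausMap N` for the trace pairing. The channel `krausMap N` is trace preserving
when `krausDual N 1 = 1`, and sub-unital when `krausMap N 1 ≤ 1`. -/
def krausDual (N : κ → Matrix n' n ℂ) (S : Matrix n' n' ℂ) : Matrix n n ℂ :=
  ∑ k, (N k)ᴴ * S * N k

lemma krausDual_sub (N : κ → Matrix n' n ℂ) (S T : Matrix n' n' ℂ) :
    krausDual N (S - T) = krausDual N S - krausDual N T := by
  simp only [krausDual, Matrix.mul_sub, Matrix.sub_mul, Finset.sum_sub_distrib]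

lemma conjTranspose_krausDual (N : κ → Matrix n' n ℂ) (S : Matrix n' n' ℂ) :
    (krausDual N S)ᴴ = krausDual N Sᴴ := by
  simp only [krausDual, conjTranspose_sum, conjTranspose_mul, conjTranspose_conjTranspose,
    Matrix.mul_assoc]

variable [Fintype n] {N : κ → Matrix n' n ℂ} {A B K : Matrix n n ℂ} {K' : Matrix n' n' ℂ}

lemma krausMap_posSemidef (N : κ → Matrix n' n ℂ) (hB : B.PosSemidef) :
    (krausMap N B).PosSemidef :=
  posSemidef_sum _ fun k _ => hB.mul_mul_conjTranspose_same (N k)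

lemma trace_krausMap_mul (N : κ → Matrix n' n ℂ) (B : Matrix n n ℂ) (S : Matrix n' n' ℂ) :
    (krausMap N B * S).trace = (B * krausDual N S).trace := by
  simp only [krausMap, krausDual, Matrix.sum_mul, Matrix.mul_sum, trace_sum]
  refine Finset.sum_congr rfl fun k _ => ?_
  rw [Matrix.mul_assoc, Matrix.mul_assoc, trace_mul_comm]
  simp only [Matrix.mul_assoc]

lemma trace_krausMap [DecidableEq n] [DecidableEq n'] (hN : krausDual N 1 = 1)
    (B : Matrix n n ℂ) : (krausMap N B).trace = B.trace := by
  rw [← Matrix.mul_one (krausMap N B), trace_krausMap_mul, hN, Matrix.mul_one]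

lemma krausDual_mul_conjTranspose_le [DecidableEq n] [DecidableEq n'] (hN : krausDual N 1 = 1)
    (S : Matrix n' n' ℂ) : krausDual N S * (krausDual N S)ᴴ ≤ krausDual N (S * Sᴴ) := by
  set T := krausDual N S with hT
  have hsum : krausDual N (S * Sᴴ) - T * Tᴴ =
      ∑ k, ((N k)ᴴ * S - T * (N k)ᴴ) * ((N k)ᴴ * S - T * (N k)ᴴ)ᴴ := by
    have hexpand : ∀ k, ((N k)ᴴ * S - T * (N k)ᴴ) * ((N k)ᴴ * S - T * (N k)ᴴ)ᴴ =
        (N k)ᴴ * (S * Sᴴ) * N k - (N k)ᴴ * S * N k * Tᴴ - T * ((N k)ᴴ * Sᴴ * N k) +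
          T * ((N k)ᴴ * (1 : Matrix n' n' ℂ) * N k) * Tᴴ := fun k => by
      simp only [conjTranspose_sub, conjTranspose_mul, conjTranspose_conjTranspose,
        Matrix.sub_mul, Matrix.mul_sub, Matrix.mul_assoc, Matrix.one_mul]
      abel
    simp only [hexpand, Finset.sum_add_distrib, Finset.sum_sub_distrib, ← Matrix.sum_mul,
      ← Matrix.mul_sum]
    rw [← krausDual, ← krausDual, ← krausDual, ← krausDual, ← conjTranspose_krausDual, ← hT, hN,
      Matrix.mul_one, sub_add_cancel]
  rw [le_iff, hsum]
  exact posSemidef_sum _ fun k _ => posSemidef_self_mul_conjTranspose _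

lemma krausMap_mul_mul_conjTranspose (hK : ∀ k, N k * K = K' * N k) (B : Matrix n n ℂ) :
    krausMap N (K * B * Kᴴ) = K' * krausMap N B * K'ᴴ := by
  have hKstar : ∀ k, Kᴴ * (N k)ᴴ = (N k)ᴴ * K'ᴴ := fun k => by
    rw [← conjTranspose_mul, hK, conjTranspose_mul]
  simp only [krausMap, Matrix.mul_sum, Matrix.sum_mul, ← Matrix.mul_assoc, hK]
  simp only [Matrix.mul_assoc, hKstar]

lemma krausDual_conjTranspose_of_intertwining [DecidableEq n] [DecidableEq n']
    (hN : krausDual N 1 = 1) (hK : ∀ k, N k * K = K' * N k) : krausDual N K'ᴴ = Kᴴ := by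
  calc krausDual N K'ᴴ = (krausDual N K')ᴴ := (conjTranspose_krausDual N K').symm
    _ = (krausDual N 1 * K)ᴴ := by
        simp only [krausDual, Matrix.mul_assoc, ← hK, Matrix.sum_mul, Matrix.one_mul]
    _ = Kᴴ := by rw [hN, Matrix.one_mul]

lemma star_dotProduct_krausMap_mulVec (N : κ → Matrix n' n ℂ) (B : Matrix n n ℂ) (v : n' → ℂ) :
    star v ⬝ᵥ krausMap N B *ᵥ v =
      ∑ k, star ((N k)ᴴ *ᵥ v) ⬝ᵥ B *ᵥ ((N k)ᴴ *ᵥ v) := by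
  rw [krausMap, sum_mulVec, dotProduct_sum]
  refine Finset.sum_congr rfl fun k _ => ?_
  rw [star_mulVec, conjTranspose_conjTranspose, ← dotProduct_mulVec, mulVec_mulVec, mulVec_mulVec,
    Matrix.mul_assoc]

lemma krausMap_mulVec_eq_zero_iff (hB : B.PosSemidef) (v : n' → ℂ) :
    krausMap N B *ᵥ v = 0 ↔ ∀ k, B *ᵥ ((N k)ᴴ *ᵥ v) = 0 := by
  simp only [← (krausMap_posSemidef N hB).dotProduct_mulVec_zero_iff,
    ← hB.dotProduct_mulVec_zero_iff, star_dotProduct_krausMap_mulVec]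
  rw [Finset.sum_eq_zero_iff_of_nonneg fun k _ => hB.dotProduct_mulVec_nonneg _]
  simp only [Finset.mem_univ, true_imp_iff]

lemma krausMap_mulVec_conjTranspose_eq_zero (hK : ∀ k, N k * K = K' * N k) (hA : A.PosSemidef)
    (hB : B.PosSemidef) (hsupp : ∀ v, B *ᵥ v = 0 → A *ᵥ (Kᴴ *ᵥ v) = 0) {v : n' → ℂ}
    (hv : krausMap N B *ᵥ v = 0) : krausMap N A *ᵥ (K'ᴴ *ᵥ v) = 0 := by
  rw [krausMap_mulVec_eq_zero_iff hA]
  intro k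
  have hshift : (N k)ᴴ *ᵥ (K'ᴴ *ᵥ v) = Kᴴ *ᵥ ((N k)ᴴ *ᵥ v) := by
    rw [mulVec_mulVec, mulVec_mulVec, ← conjTranspose_mul, ← conjTranspose_mul, hK]
  rw [hshift]
  exact hsupp _ ((krausMap_mulVec_eq_zero_iff hB v).1 hv k)

end KrausMap

section OperatorJensen

variable {n n' κ : Type*} [Fintype n']

/-- The matrix whose columns are the vectors `(N k)ᴴ v`. It expresses the quadratic form of
`krausMap N C` at `v` as the trace of a congruence of `C`. -/
def krausCols (N : κ → Matrix n' n ℂ) (v : n' → ℂ) : Matrix n κ ℂ :=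
  Matrix.of fun i k => ((N k)ᴴ *ᵥ v) i

lemma krausCols_sub (N : κ → Matrix n' n ℂ) (v w : n' → ℂ) :
    krausCols N (v - w) = krausCols N v - krausCols N w := by
  ext i k
  simp [krausCols, mulVec_sub]

lemma trace_replicateCol (C : Matrix n' n' ℂ) (v : n' → ℂ) :
    ((replicateCol Unit v)ᴴ * C * replicateCol Unit v).trace = star v ⬝ᵥ C *ᵥ v := by
  rw [Matrix.mul_assoc, Matrix.trace, Fintype.sum_unique]
  rfl

variable [Fintype n] [Fintype κ]

lemma trace_krausCols (N : κ → Matrix n' n ℂ) (C : Matrix n n ℂ) (v : n' → ℂ) :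
    ((krausCols N v)ᴴ * C * krausCols N v).trace = star v ⬝ᵥ krausMap N C *ᵥ v := by
  rw [star_dotProduct_krausMap_mulVec, Matrix.mul_assoc]
  rfl

variable [DecidableEq n] [DecidableEq n'] {N : κ → Matrix n' n ℂ} {A : Matrix n n ℂ} {p : ℝ}

lemma exists_krausCols_test [DecidableEq κ] (hN : krausMap N 1 ≤ 1) (A : Matrix n n ℂ) (v : n' → ℂ)
    (S' : Matrix n' Unit ℂ) : ∃ S : Matrix n κ ℂ,
      (Sᴴ * A * S).trace.re ≤ (S'ᴴ * krausMap N A * S').trace.re ∧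
      ((krausCols N v - S) * (1 : Matrix κ κ ℂ) * (krausCols N v - S)ᴴ).trace.re ≤
        ((replicateCol Unit v - S') * (1 : Matrix Unit Unit ℂ) *
          (replicateCol Unit v - S')ᴴ).trace.re := by
  obtain ⟨w, rfl⟩ : ∃ w, S' = replicateCol Unit w := ⟨fun i => S' i (), rfl⟩
  have hsub : replicateCol Unit v - replicateCol Unit w = replicateCol Unit (v - w) := rfl
  refine ⟨krausCols N w, (trace_krausCols N A w ▸ (trace_replicateCol _ w).symm ▸ le_rfl), ?_⟩
  rw [← krausCols_sub, hsub, Matrix.mul_one, Matrix.mul_one, trace_mul_comm,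
    trace_mul_comm (replicateCol Unit _)]
  have h := re_star_dotProduct_mulVec_mono hN (v - w)
  rw [← trace_krausCols, ← trace_replicateCol] at h
  simpa only [Matrix.mul_one] using h

lemma krausMap_matPow_le (hN : krausMap N 1 ≤ 1) (hA : A.PosSemidef) (hp : p ∈ Set.Ioc 0 1) :
    krausMap N (matPow A p) ≤ matPow (krausMap N A) p := by
  classical
  have hE := krausMap_posSemidef N hA
  rcases hp.2.eq_or_lt with rfl | hp1
  · rw [matPow_one hA, matPow_one hE]
  refine le_of_re_star_dotProduct_mulVec_le (krausMap_posSemidef N (matPow_posSemidef A p)).1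
    (matPow_isHermitian _ p) fun v => ?_
  have h := re_trace_mul_matPow_mul_matPow_le hA PosSemidef.one hE PosSemidef.one
    (exists_krausCols_test hN A v) ⟨hp.1, hp1⟩
  simpa only [matPow_one_left, Matrix.mul_one, trace_krausCols, trace_replicateCol] using h

lemma matPow_krausMap_le (hN : krausMap N 1 ≤ 1) (hA : A.PosSemidef) (hp : p ∈ Set.Icc 1 2) :
    matPow (krausMap N A) p ≤ krausMap N (matPow A p) := by
  classical
  have hE := krausMap_posSemidef N hA
  rcases hp.1.eq_or_lt with rfl | hp1
  · rw [matPow_one hA, matPow_one hE]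
  refine le_of_re_star_dotProduct_mulVec_le (matPow_isHermitian _ p)
    (krausMap_posSemidef N (matPow_posSemidef A p)).1 fun v => ?_
  have hlin : ((replicateCol Unit v)ᴴ * krausMap N A * replicateCol Unit v).trace.re ≤
      ((krausCols N v)ᴴ * A * krausCols N v).trace.re := by
    rw [trace_krausCols, trace_replicateCol]
  have h := re_trace_mul_matPow_mul_matPow_le_of_one_lt hA PosSemidef.one hE PosSemidef.one
    (exists_krausCols_test hN A v) hlin
    (fun w hw => by rw [← one_mulVec w, hw, mulVec_zero, mulVec_zero])
    (fun w hw => by rw [← one_mulVec w, hw, mulVec_zero, mulVec_zero]) ⟨hp1, hp.2⟩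
  simpa only [matPow_one_left, Matrix.mul_one, trace_krausCols, trace_replicateCol] using h

end OperatorJensen

section LiebConcavity

variable {n n' κ : Type*} [Fintype n] [DecidableEq n] [Fintype n'] [DecidableEq n'] [Fintype κ]
  {N : κ → Matrix n' n ℂ} {A B K : Matrix n n ℂ} {K' : Matrix n' n' ℂ} {p : ℝ}

lemma re_trace_conjTranspose_krausDual_mul_le (hN : krausDual N 1 = 1) (hA : A.PosSemidef)
    (S : Matrix n' n' ℂ) :
    ((krausDual N S)ᴴ * A * krausDual N S).trace.re ≤ (Sᴴ * krausMap N A * S).trace.re := by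
  have h := re_trace_mul_mono hA (krausDual_mul_conjTranspose_le hN S)
  rwa [← trace_krausMap_mul, ← Matrix.mul_assoc, ← Matrix.mul_assoc, trace_mul_cycle,
    trace_mul_cycle (krausMap N A)] at h

lemma exists_krausDual_test (hN : krausDual N 1 = 1) (hK : ∀ k, N k * K = K' * N k)
    (hA : A.PosSemidef) (hB : B.PosSemidef) (S' : Matrix n' n' ℂ) : ∃ S : Matrix n n ℂ,
      (Sᴴ * A * S).trace.re ≤ (S'ᴴ * krausMap N A * S').trace.re ∧
      ((Kᴴ - S) * B * (Kᴴ - S)ᴴ).trace.re ≤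
        ((K'ᴴ - S') * krausMap N B * (K'ᴴ - S')ᴴ).trace.re := by
  refine ⟨krausDual N S', re_trace_conjTranspose_krausDual_mul_le hN hA S', ?_⟩
  have h := re_trace_conjTranspose_krausDual_mul_le hN hB (K'ᴴ - S')ᴴ
  rwa [← conjTranspose_krausDual, conjTranspose_conjTranspose, conjTranspose_conjTranspose,
    krausDual_sub, krausDual_conjTranspose_of_intertwining hN hK] at h

lemma re_trace_mul_matPow_mul_matPow_le_krausMap (hN : krausDual N 1 = 1)
    (hK : ∀ k, N k * K = K' * N k) (hA : A.PosSemidef) (hB : B.PosSemidef)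
    (hp : p ∈ Set.Ioo 0 1) :
    (K * matPow A p * Kᴴ * matPow B (1 - p)).trace.re ≤
      (K' * matPow (krausMap N A) p * K'ᴴ * matPow (krausMap N B) (1 - p)).trace.re := by
  have h := re_trace_mul_matPow_mul_matPow_le hA hB (krausMap_posSemidef N hA)
    (krausMap_posSemidef N hB) (exists_krausDual_test hN hK hA hB) hp
  simpa only [conjTranspose_conjTranspose] using h

lemma krausMap_re_trace_mul_matPow_mul_matPow_le (hN : krausDual N 1 = 1)
    (hK : ∀ k, N k * K = K' * N k) (hA : A.PosSemidef) (hB : B.PosSemidef)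
    (hsupp : ∀ v, B *ᵥ v = 0 → A *ᵥ (Kᴴ *ᵥ v) = 0) (hp : p ∈ Set.Ioc 1 2) :
    (K' * matPow (krausMap N A) p * K'ᴴ * matPow (krausMap N B) (1 - p)).trace.re ≤
      (K * matPow A p * Kᴴ * matPow B (1 - p)).trace.re := by
  have hlin : (K'ᴴᴴ * krausMap N A * K'ᴴ).trace.re ≤ (Kᴴᴴ * A * Kᴴ).trace.re := by
    rw [conjTranspose_conjTranspose, conjTranspose_conjTranspose,
      ← krausMap_mul_mul_conjTranspose hK, trace_krausMap hN]
  have h := re_trace_mul_matPow_mul_matPow_le_of_one_lt hA hB (krausMap_posSemidef N hA)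
    (krausMap_posSemidef N hB) (exists_krausDual_test hN hK hA hB) hlin hsupp
    (fun _ => krausMap_mulVec_conjTranspose_eq_zero hK hA hB hsupp) hp
  simpa only [conjTranspose_conjTranspose] using h

end LiebConcavity

section TraceJensen

open Set

lemma convexOn_map_sum_le_of_sum_le_one {I : Type*} [Fintype I] {f : ℝ → ℝ}
    (hf : ConvexOn ℝ (Ici 0) f) (hf0 : f 0 ≤ 0) {w x : I → ℝ} (hw : ∀ i, 0 ≤ w i)
    (hw1 : ∑ i, w i ≤ 1) (hx : ∀ i, 0 ≤ x i) : f (∑ i, w i * x i) ≤ ∑ i, w i * f (x i) := by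
  have h := hf.map_sum_le (t := Finset.univ)
    (w := fun o : Option I => o.elim (1 - ∑ i, w i) w) (p := fun o : Option I => o.elim 0 x)
    (by rintro (_ | i) _ <;> simp [hw, hw1]) (by simp [Fintype.sum_option])
    (by rintro (_ | i) _ <;> simp [hx])
  simp only [Fintype.sum_option, Option.elim, smul_eq_mul, mul_zero, zero_add] at h
  nlinarith [mul_nonneg (sub_nonneg.2 hw1) (neg_nonneg.2 hf0)]

variable {n n' κ : Type*} [Fintype n] [DecidableEq n] [Fintype n'] [Fintype κ]
  {N : κ → Matrix n' n ℂ} {X : Matrix n n ℂ} {Y : Matrix n' n' ℂ} {f : ℝ → ℝ} {z : ℝ}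

lemma star_dotProduct_krausMap_cfc_mulVec (N : κ → Matrix n' n ℂ) (hX : X.IsHermitian)
    (f : ℝ → ℝ) (v : n' → ℂ) :
    star v ⬝ᵥ krausMap N (cfc f X) *ᵥ v = ((∑ q : κ × n,
      ‖((hX.eigenvectorUnitary : Matrix n n ℂ)ᴴ *ᵥ ((N q.1)ᴴ *ᵥ v)) q.2‖ ^ 2 *
        f (hX.eigenvalues q.2) : ℝ) : ℂ) := by
  rw [star_dotProduct_krausMap_mulVec, Fintype.sum_prod_type, Complex.ofReal_sum]
  exact Finset.sum_congr rfl fun k _ => star_dotProduct_cfc_mulVec hX f _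

variable [DecidableEq n']

lemma map_re_star_dotProduct_krausMap_mulVec_le (hN : krausMap N 1 ≤ 1) (hX : X.PosSemidef)
    (hf : ConvexOn ℝ (Ici 0) f) (hf0 : f 0 ≤ 0) {v : n' → ℂ} (hv : star v ⬝ᵥ v = 1) :
    f (star v ⬝ᵥ krausMap N X *ᵥ v).re ≤ (star v ⬝ᵥ krausMap N (cfc f X) *ᵥ v).re := by
  have hone := re_star_dotProduct_mulVec_mono hN v
  rw [one_mulVec, hv, Complex.one_re, ← cfc_const_one ℝ X hX.1.isSelfAdjoint,
    star_dotProduct_krausMap_cfc_mulVec N hX.1, Complex.ofReal_re] at hone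
  have hid := star_dotProduct_krausMap_cfc_mulVec N hX.1 id v
  rw [cfc_id ℝ X hX.1.isSelfAdjoint] at hid
  rw [hid, star_dotProduct_krausMap_cfc_mulVec N hX.1, Complex.ofReal_re, Complex.ofReal_re]
  exact convexOn_map_sum_le_of_sum_le_one hf hf0 (fun q => by positivity)
    (by simpa only [mul_one] using hone) fun q => hX.eigenvalues_nonneg q.2

lemma re_trace_cfc_le_of_convexOn (hN1 : krausDual N 1 = 1) (hN : krausMap N 1 ≤ 1)
    (hX : X.PosSemidef) (hY : Y.IsHermitian) (hf : ConvexOn ℝ (Ici 0) f) (hf0 : f 0 ≤ 0)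
    (h : ∀ v, f (star v ⬝ᵥ Y *ᵥ v).re ≤ f (star v ⬝ᵥ krausMap N X *ᵥ v).re) :
    (cfc f Y).trace.re ≤ (cfc f X).trace.re := by
  calc (cfc f Y).trace.re
      = ∑ j, f (star ⇑(hY.eigenvectorBasis j) ⬝ᵥ Y *ᵥ ⇑(hY.eigenvectorBasis j)).re := by
        rw [trace_cfc hY, Complex.ofReal_re]
        simp only [hY.eigenvalues_eq, RCLike.re_eq_complex_re]
    _ ≤ ∑ j, (star ⇑(hY.eigenvectorBasis j) ⬝ᵥ krausMap N (cfc f X) *ᵥ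
          ⇑(hY.eigenvectorBasis j)).re :=
        Finset.sum_le_sum fun j _ => (h _).trans
          (map_re_star_dotProduct_krausMap_mulVec_le hN hX hf hf0
            (star_eigenvectorBasis_dotProduct_self hY j))
    _ = (cfc f X).trace.re := by
        rw [← Complex.re_sum, ← trace_eq_sum_star_eigenvectorBasis_dotProduct, trace_krausMap hN1]

lemma re_trace_matPow_le_of_le_krausMap (hN1 : krausDual N 1 = 1) (hN : krausMap N 1 ≤ 1)
    (hX : X.PosSemidef) (hY : Y.PosSemidef) (h : Y ≤ krausMap N X) (hz : 1 ≤ z) :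
    (matPow Y z).trace.re ≤ (matPow X z).trace.re := by
  have hz0 : z ≠ 0 := (zero_lt_one.trans_le hz).ne'
  rw [matPow_eq_cfc_rpow hX hz0, matPow_eq_cfc_rpow hY hz0]
  exact re_trace_cfc_le_of_convexOn hN1 hN hX hY.1 (convexOn_rpow hz) (Real.zero_rpow hz0).le
    fun v => Real.rpow_le_rpow (re_star_dotProduct_mulVec_nonneg hY v)
      (re_star_dotProduct_mulVec_mono h v) (zero_le_one.trans hz)

lemma re_trace_matPow_le_of_krausMap_le (hN1 : krausDual N 1 = 1) (hN : krausMap N 1 ≤ 1)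
    (hX : X.PosSemidef) (hY : Y.PosSemidef) (h : krausMap N X ≤ Y) (hz : z ∈ Ioc 0 1) :
    (matPow X z).trace.re ≤ (matPow Y z).trace.re := by
  have hz0 : z ≠ 0 := hz.1.ne'
  rw [matPow_eq_cfc_rpow hX hz0, matPow_eq_cfc_rpow hY hz0]
  have hneg := re_trace_cfc_le_of_convexOn (f := fun x => -x ^ z) hN1 hN hX hY.1
    (Real.concaveOn_rpow hz.1.le hz.2).neg (by simp [Real.zero_rpow hz0])
    fun v => neg_le_neg (Real.rpow_le_rpow
      (re_star_dotProduct_mulVec_nonneg (krausMap_posSemidef N hX) v)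
      (re_star_dotProduct_mulVec_mono h v) hz.1.le)
  rwa [cfc_neg, cfc_neg, trace_neg, trace_neg, Complex.neg_re, Complex.neg_re, neg_le_neg_iff]
    at hneg

end TraceJensen

section TraceYoung

variable {n : Type*} [Fintype n] [DecidableEq n] {X Y : Matrix n n ℂ} {z : ℝ}

lemma add_mul_rpow_le_mul_of_lt_one {x y : ℝ} (hx : 0 ≤ x) (hy : 0 < y)
    (hz : z ∈ Set.Ioo 0 1) :
    x ^ z / z + (1 - 1 / z) * y ^ (z / (z - 1)) ≤ x * y := by
  obtain ⟨hz0, hz1⟩ := hz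
  have hz : z - 1 ≠ 0 := by linarith
  have hexp : z + z / (z - 1) * (1 - z) = 0 := by field_simp; ring
  have hprod : (x * y) ^ z * (y ^ (z / (z - 1))) ^ (1 - z) = x ^ z := by
    rw [Real.mul_rpow hx hy.le, ← Real.rpow_mul hy.le, mul_assoc, ← Real.rpow_add hy, hexp,
      Real.rpow_zero, mul_one]
  have hamgm := Real.geom_mean_le_arith_mean2_weighted (w₁ := z) (w₂ := 1 - z) (p₁ := x * y)
    (p₂ := y ^ (z / (z - 1))) hz0.le (by linarith) (by positivity) (by positivity) (by ring)
  rw [hprod] at hamgm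
  calc x ^ z / z + (1 - 1 / z) * y ^ (z / (z - 1))
      ≤ (z * (x * y) + (1 - z) * y ^ (z / (z - 1))) / z + (1 - 1 / z) * y ^ (z / (z - 1)) := by
        gcongr
    _ = x * y := by
        field_simp
        ring

lemma trace_cfc_mul_cfc (hX : X.IsHermitian) (hY : Y.IsHermitian) (f g : ℝ → ℝ) :
    (cfc f X * cfc g Y).trace = ((∑ q : n × n, ‖eigenCoeff hX hY 1 q.1 q.2‖ ^ 2 *
      (f (hX.eigenvalues q.1) * g (hY.eigenvalues q.2)) : ℝ) : ℂ) := by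
  rw [← trace_conjTranspose_mul_cfc_mul_mul_cfc, conjTranspose_one, Matrix.one_mul, Matrix.mul_one]

lemma trace_cfc_eq_sum_left (hX : X.IsHermitian) (hY : Y.IsHermitian) (f : ℝ → ℝ) :
    (cfc f X).trace = ((∑ q : n × n, ‖eigenCoeff hX hY 1 q.1 q.2‖ ^ 2 *
      f (hX.eigenvalues q.1) : ℝ) : ℂ) := by
  simpa only [cfc_const_one ℝ Y hY.isSelfAdjoint, Matrix.mul_one, mul_one] using
    trace_cfc_mul_cfc hX hY f fun _ => 1

lemma trace_cfc_eq_sum_right (hX : X.IsHermitian) (hY : Y.IsHermitian) (g : ℝ → ℝ) :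
    (cfc g Y).trace = ((∑ q : n × n, ‖eigenCoeff hX hY 1 q.1 q.2‖ ^ 2 *
      g (hY.eigenvalues q.2) : ℝ) : ℂ) := by
  simpa only [cfc_const_one ℝ X hX.isSelfAdjoint, Matrix.one_mul, one_mul] using
    trace_cfc_mul_cfc hX hY (fun _ => 1) g

lemma trace_mul_eq_sum (hX : X.IsHermitian) (hY : Y.IsHermitian) :
    (X * Y).trace = ((∑ q : n × n, ‖eigenCoeff hX hY 1 q.1 q.2‖ ^ 2 *
      (hX.eigenvalues q.1 * hY.eigenvalues q.2) : ℝ) : ℂ) := by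
  simpa only [cfc_id ℝ X hX.isSelfAdjoint, cfc_id ℝ Y hY.isSelfAdjoint, id_eq] using
    trace_cfc_mul_cfc hX hY id id

lemma re_trace_mul_le_young (hX : X.PosSemidef) (hY : Y.PosSemidef) (hz : 1 < z) :
    (X * Y).trace.re ≤
      (matPow X z).trace.re / z + (1 - 1 / z) * (matPow Y (z / (z - 1))).trace.re := by
  have hz0 : 0 < z := zero_lt_one.trans hz
  have hz1 : 0 < z - 1 := sub_pos.2 hz
  rw [matPow_eq_cfc_rpow hX hz0.ne', matPow_eq_cfc_rpow hY (div_pos hz0 hz1).ne',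
    trace_cfc_eq_sum_left hX.1 hY.1, trace_cfc_eq_sum_right hX.1 hY.1, trace_mul_eq_sum hX.1 hY.1]
  simp only [Complex.ofReal_re, Finset.sum_div, Finset.mul_sum, ← Finset.sum_add_distrib]
  refine Finset.sum_le_sum fun q _ => ?_
  have hyoung := Real.young_inequality_of_nonneg (hX.eigenvalues_nonneg q.1)
    (hY.eigenvalues_nonneg q.2) (Real.HolderConjugate.conjExponent hz)
  refine (mul_le_mul_of_nonneg_left hyoung (sq_nonneg _)).trans_eq ?_
  rw [Real.conjExponent]
  field_simp

lemma young_le_re_trace_mul (hX : X.PosSemidef) (hY : Y.PosSemidef)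
    (hsupp : ∀ v, Y *ᵥ v = 0 → X *ᵥ v = 0) (hz : z ∈ Set.Ioo 0 1) :
    (matPow X z).trace.re / z + (1 - 1 / z) * (matPow Y (z / (z - 1))).trace.re ≤
      (X * Y).trace.re := by
  have hz1 : z - 1 < 0 := sub_neg.2 hz.2
  have hexp : z / (z - 1) ≠ 0 := (div_neg_of_pos_of_neg hz.1 hz1).ne
  rw [matPow_eq_cfc_rpow hX hz.1.ne', matPow_eq_cfc_rpow hY hexp,
    trace_cfc_eq_sum_left hX.1 hY.1, trace_cfc_eq_sum_right hX.1 hY.1, trace_mul_eq_sum hX.1 hY.1]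
  simp only [Complex.ofReal_re, Finset.sum_div, Finset.mul_sum, ← Finset.sum_add_distrib]
  refine Finset.sum_le_sum fun q _ => ?_
  have hx := hX.eigenvalues_nonneg q.1
  rcases (hY.eigenvalues_nonneg q.2).eq_or_lt with hy | hy
  · have hw := sq_norm_eigenCoeff_mul_eigenvalues_eq_zero (K := 1) hX.1 hY.1
      (fun v hv => by rw [one_mulVec, hsupp v hv]) q.1 hy.symm
    rw [← hy, Real.zero_rpow hexp]
    rcases mul_eq_zero.1 hw with h0 | h0
    · simp [h0]
    · simp [h0, Real.zero_rpow hz.1.ne']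
  · refine le_of_eq_of_le ?_ (mul_le_mul_of_nonneg_left
      (add_mul_rpow_le_mul_of_lt_one hx hy hz) (sq_nonneg _))
    ring

end TraceYoung

section ChannelMonotonicity

variable {n n' κ : Type*} [Fintype n] [DecidableEq n] [Fintype n'] [DecidableEq n'] [Fintype κ]
  {N : κ → Matrix n' n ℂ} {A K X : Matrix n n ℂ} {K' : Matrix n' n' ℂ} {p z : ℝ}

lemma mul_matPow_matPow_dualExponent (hX : X.PosSemidef) (hp : p ≠ 1) (z : ℝ) :
    X * matPow (matPow X ((z - 1) / (1 - p))) (1 - p) = matPow X z := by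
  rw [matPow_matPow hX.1, div_mul_cancel₀ _ (sub_ne_zero.2 hp.symm)]
  nth_rw 1 [← matPow_one hX]
  rw [matPow_mul_matPow, add_sub_cancel]

lemma matPow_matPow_dualExponent (hX : X.IsHermitian) (hp : p ≠ 1) (hz : z ≠ 1) :
    matPow (matPow X ((z - 1) / (1 - p))) ((1 - p) * (z / (z - 1))) = matPow X z := by
  have hp' : 1 - p ≠ 0 := sub_ne_zero.2 hp.symm
  have hz' : z - 1 ≠ 0 := sub_ne_zero.2 hz
  rw [matPow_matPow hX]
  congr 1
  field_simp

lemma mulVec_conjTranspose_eq_zero_of_mul_matPow_mul (hA : A.PosSemidef) {v : n → ℂ}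
    (hv : (K * matPow A p * Kᴴ) *ᵥ v = 0) : A *ᵥ (Kᴴ *ᵥ v) = 0 := by
  have hpow := matPow_posSemidef A p
  rw [← matPow_mulVec_eq_zero_iff hA p, ← hpow.dotProduct_mulVec_zero_iff]
  rw [star_mulVec, conjTranspose_conjTranspose, ← dotProduct_mulVec, mulVec_mulVec, mulVec_mulVec,
    hv, dotProduct_zero]

lemma re_trace_matPow_le_krausMap_of_one_lt (hN1 : krausDual N 1 = 1) (hN : krausMap N 1 ≤ 1)
    (hK : ∀ k, N k * K = K' * N k) (hA : A.PosSemidef) (hp : p ∈ Set.Ioo 0 1) (hz : 1 < z)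
    (hpz : p * z ≤ 1) :
    (matPow (K * matPow A p * Kᴴ) z).trace.re ≤
      (matPow (K' * matPow (krausMap N A) p * K'ᴴ) z).trace.re := by
  set X := K * matPow A p * Kᴴ
  set X' := K' * matPow (krausMap N A) p * K'ᴴ
  have hX : X.PosSemidef := (matPow_posSemidef A p).mul_mul_conjTranspose_same K
  have hX' : X'.PosSemidef := (matPow_posSemidef _ p).mul_mul_conjTranspose_same K'
  -- With this `B`, Young's inequality for `X` and `B ^ (1 - p)` is an equality.
  set B := matPow X ((z - 1) / (1 - p))
  have hB : B.PosSemidef := matPow_posSemidef _ _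
  have hlieb := re_trace_mul_matPow_mul_matPow_le_krausMap hN1 hK hA hB hp
  have hyoung := re_trace_mul_le_young hX' (matPow_posSemidef (krausMap N B) (1 - p)) hz
  have hr : 1 ≤ (1 - p) * (z / (z - 1)) := by
    rw [← mul_div_assoc, one_le_div (sub_pos.2 hz)]
    linarith
  have hjensen := re_trace_matPow_le_of_le_krausMap hN1 hN hB (krausMap_posSemidef N hB) le_rfl hr
  rw [mul_matPow_matPow_dualExponent hX hp.2.ne] at hlieb
  rw [matPow_matPow (krausMap_posSemidef N hB).1] at hyoung
  rw [matPow_matPow_dualExponent hX.1 hp.2.ne hz.ne'] at hjensen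
  have hz' : 0 ≤ 1 - 1 / z := sub_nonneg.2 ((div_le_one (by linarith)).2 hz.le)
  have hself : (matPow X z).trace.re ≤
      (matPow X' z).trace.re / z + (1 - 1 / z) * (matPow X z).trace.re :=
    (hlieb.trans hyoung).trans (by gcongr)
  rw [← div_le_div_iff_of_pos_right (zero_lt_one.trans hz)]
  linarith [hself, div_eq_mul_one_div (matPow X z).trace.re z]

lemma krausMap_re_trace_matPow_le_of_lt_one (hN1 : krausDual N 1 = 1) (hN : krausMap N 1 ≤ 1)
    (hK : ∀ k, N k * K = K' * N k) (hA : A.PosSemidef) (hp : p ∈ Set.Ioc 1 2)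
    (hz : z ∈ Set.Ioo 0 1) (hpz : 1 ≤ p * z) :
    (matPow (K' * matPow (krausMap N A) p * K'ᴴ) z).trace.re ≤
      (matPow (K * matPow A p * Kᴴ) z).trace.re := by
  set X := K * matPow A p * Kᴴ
  set X' := K' * matPow (krausMap N A) p * K'ᴴ with hX'def
  have hX : X.PosSemidef := (matPow_posSemidef A p).mul_mul_conjTranspose_same K
  have hX' : X'.PosSemidef := (matPow_posSemidef _ p).mul_mul_conjTranspose_same K'
  set B := matPow X ((z - 1) / (1 - p))
  have hB : B.PosSemidef := matPow_posSemidef _ _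
  have hE := krausMap_posSemidef N hB
  have hsupp : ∀ v, B *ᵥ v = 0 → A *ᵥ (Kᴴ *ᵥ v) = 0 := fun v hv =>
    mulVec_conjTranspose_eq_zero_of_mul_matPow_mul hA ((matPow_mulVec_eq_zero_iff hX _ v).1 hv)
  have hsupp' : ∀ v, matPow (krausMap N B) (1 - p) *ᵥ v = 0 → X' *ᵥ v = 0 := fun v hv => by
    have hAv := krausMap_mulVec_conjTranspose_eq_zero hK hA hB hsupp
      ((matPow_mulVec_eq_zero_iff hE _ v).1 hv)
    rw [← matPow_mulVec_eq_zero_iff (krausMap_posSemidef N hA) p] at hAv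
    rw [hX'def, ← mulVec_mulVec, ← mulVec_mulVec, hAv, mulVec_zero]
  have hlieb := krausMap_re_trace_mul_matPow_mul_matPow_le hN1 hK hA hB hsupp hp
  have hyoung := young_le_re_trace_mul hX' (matPow_posSemidef _ (1 - p)) hsupp' hz
  have hr : 1 ≤ (1 - p) * (z / (z - 1)) := by
    rw [← mul_div_assoc, one_le_div_of_neg (sub_neg.2 hz.2)]
    linarith
  have hjensen := re_trace_matPow_le_of_le_krausMap hN1 hN hB hE le_rfl hr
  rw [mul_matPow_matPow_dualExponent hX hp.1.ne'] at hlieb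
  rw [matPow_matPow hE.1] at hyoung
  rw [matPow_matPow_dualExponent hX.1 hp.1.ne' hz.2.ne] at hjensen
  have hz' : 1 - 1 / z ≤ 0 := sub_nonpos.2 ((one_le_div hz.1).2 hz.2.le)
  have hself := (hyoung.trans hlieb).trans' (add_le_add_right
    (mul_le_mul_of_nonpos_left hjensen hz') _)
  rw [← div_le_div_iff_of_pos_right hz.1]
  linarith [hself, div_eq_mul_one_div (matPow X z).trace.re z]

lemma re_trace_matPow_le_krausMap (hN1 : krausDual N 1 = 1) (hN : krausMap N 1 ≤ 1)
    (hK : ∀ k, N k * K = K' * N k) (hA : A.PosSemidef) (hp : p ∈ Set.Ioc 0 1) (hz : 0 < z)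
    (hpz : p * z ≤ 1) :
    (matPow (K * matPow A p * Kᴴ) z).trace.re ≤
      (matPow (K' * matPow (krausMap N A) p * K'ᴴ) z).trace.re := by
  rcases le_or_gt z 1 with hz1 | hz1
  · refine re_trace_matPow_le_of_krausMap_le hN1 hN
      ((matPow_posSemidef A p).mul_mul_conjTranspose_same K)
      ((matPow_posSemidef _ p).mul_mul_conjTranspose_same K') ?_ ⟨hz, hz1⟩
    rw [krausMap_mul_mul_conjTranspose hK]
    exact star_right_conjugate_le_conjugate (krausMap_matPow_le hN hA hp) K'
  · have hp1 : p < 1 := by nlinarith [hp.1]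
    exact re_trace_matPow_le_krausMap_of_one_lt hN1 hN hK hA ⟨hp.1, hp1⟩ hz1 hpz

lemma krausMap_re_trace_matPow_le (hN1 : krausDual N 1 = 1) (hN : krausMap N 1 ≤ 1)
    (hK : ∀ k, N k * K = K' * N k) (hA : A.PosSemidef) (hp : p ∈ Set.Icc 1 2) (hz : 0 < z)
    (hpz : 1 ≤ p * z) :
    (matPow (K' * matPow (krausMap N A) p * K'ᴴ) z).trace.re ≤
      (matPow (K * matPow A p * Kᴴ) z).trace.re := by
  rcases le_or_gt 1 z with hz1 | hz1
  · refine re_trace_matPow_le_of_le_krausMap hN1 hN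
      ((matPow_posSemidef A p).mul_mul_conjTranspose_same K)
      ((matPow_posSemidef _ p).mul_mul_conjTranspose_same K') ?_ hz1
    rw [krausMap_mul_mul_conjTranspose hK]
    exact star_right_conjugate_le_conjugate (matPow_krausMap_le hN hA hp) K'
  · have hp1 : 1 < p := by nlinarith [hp.1]
    exact krausMap_re_trace_matPow_le_of_lt_one hN1 hN hK hA ⟨hp1, hp.2⟩ ⟨hz, hz1⟩ hpz

end ChannelMonotonicity

section PartialTrace

variable {mA mB : Type*} [Fintype mA] [Fintype mB]

lemma ptraceFst_eq_sum_submatrix (ρ : Matrix (mA × mB) (mA × mB) ℂ) :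
    ptraceFst ρ = ∑ i, ρ.submatrix (Prod.mk i) (Prod.mk i) := by
  ext j j'
  simp only [ptraceFst, of_apply, Matrix.sum_apply, submatrix_apply]

lemma ptraceFst_posSemidef {ρ : Matrix (mA × mB) (mA × mB) ℂ} (hρ : ρ.PosSemidef) :
    (ptraceFst ρ).PosSemidef := by
  rw [ptraceFst_eq_sum_submatrix]
  exact posSemidef_sum _ fun i _ => hρ.submatrix (Prod.mk i)

lemma trace_ptraceFst (ρ : Matrix (mA × mB) (mA × mB) ℂ) : (ptraceFst ρ).trace = ρ.trace := by
  simp only [trace, diag_apply, ptraceFst, of_apply, Fintype.sum_prod_type_right]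

variable [DecidableEq mA]

lemma ptraceFst_mul_one_kronecker (ρ : Matrix (mA × mB) (mA × mB) ℂ) (Y : Matrix mB mB ℂ) :
    ptraceFst (ρ * ((1 : Matrix mA mA ℂ) ⊗ₖ Y)) = ptraceFst ρ * Y := by
  ext j j'
  simp only [ptraceFst, of_apply, mul_apply, kroneckerMap_apply, Matrix.one_apply,
    Fintype.sum_prod_type, ite_mul, one_mul, zero_mul, mul_ite, mul_zero, Finset.sum_ite_irrel,
    Finset.sum_const_zero, Finset.sum_ite_eq', Finset.mem_univ, if_true, Finset.sum_mul]
  exact Finset.sum_comm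

lemma trace_mul_one_kronecker (ρ : Matrix (mA × mB) (mA × mB) ℂ) (Y : Matrix mB mB ℂ) :
    (ρ * ((1 : Matrix mA mA ℂ) ⊗ₖ Y)).trace = (ptraceFst ρ * Y).trace := by
  rw [← ptraceFst_mul_one_kronecker, trace_ptraceFst]

lemma conjTranspose_one_kronecker_mul_self (y : Matrix mB mB ℂ) :
    ((1 : Matrix mA mA ℂ) ⊗ₖ y)ᴴ * ((1 : Matrix mA mA ℂ) ⊗ₖ y) =
      (1 : Matrix mA mA ℂ) ⊗ₖ (yᴴ * y) := by
  rw [conjTranspose_kronecker, conjTranspose_one, ← mul_kronecker_mul, Matrix.one_mul]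

lemma trace_one_kronecker_conj (X : Matrix (mA × mB) (mA × mB) ℂ) (y : Matrix mB mB ℂ) :
    (((1 : Matrix mA mA ℂ) ⊗ₖ y) * X * ((1 : Matrix mA mA ℂ) ⊗ₖ y)ᴴ).trace =
      (X * ((1 : Matrix mA mA ℂ) ⊗ₖ (yᴴ * y))).trace := by
  rw [trace_mul_cycle, conjTranspose_one_kronecker_mul_self, trace_mul_comm]

variable [DecidableEq mB]

lemma isDensity_ptraceFst {ρ : Matrix (mA × mB) (mA × mB) ℂ} (hρ : IsDensity ρ) :
    IsDensity (ptraceFst ρ) :=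
  ⟨ptraceFst_posSemidef hρ.1, (trace_ptraceFst ρ).trans hρ.2⟩

end PartialTrace

section LocalKrausMap

lemma sum_kronecker {κ m m' n n' : Type*} [Fintype κ] (X : κ → Matrix m' m ℂ) (Y : Matrix n' n ℂ) :
    ∑ k, X k ⊗ₖ Y = (∑ k, X k) ⊗ₖ Y := by
  ext i j
  simp only [Matrix.sum_apply, kroneckerMap_apply, Finset.sum_mul]

variable {mA mA' mB κ : Type*} [Fintype mB] [DecidableEq mB]

/-- The Kraus operators `M k ⊗ I_B` of the channel with Kraus operators `M k` acting on the first
tensor factor only. -/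
def localKraus (mB : Type*) [DecidableEq mB] (M : κ → Matrix mA' mA ℂ) (k : κ) :
    Matrix (mA' × mB) (mA × mB) ℂ :=
  M k ⊗ₖ (1 : Matrix mB mB ℂ)

lemma localKraus_mul_one_kronecker [Fintype mA] [DecidableEq mA] [Fintype mA'] [DecidableEq mA']
    (M : κ → Matrix mA' mA ℂ) (y : Matrix mB mB ℂ) (k : κ) :
    localKraus mB M k * ((1 : Matrix mA mA ℂ) ⊗ₖ y) =
      ((1 : Matrix mA' mA' ℂ) ⊗ₖ y) * localKraus mB M k := by
  simp only [localKraus, ← mul_kronecker_mul, Matrix.mul_one, Matrix.one_mul]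

variable [Fintype κ]

lemma krausMap_localKraus_kronecker [Fintype mA] (M : κ → Matrix mA' mA ℂ)
    (X : Matrix mA mA ℂ) (Y : Matrix mB mB ℂ) :
    krausMap (localKraus mB M) (X ⊗ₖ Y) = krausMap M X ⊗ₖ Y := by
  simp only [krausMap, localKraus, conjTranspose_kronecker, conjTranspose_one, ← mul_kronecker_mul,
    Matrix.mul_one, Matrix.one_mul, sum_kronecker]

lemma krausDual_localKraus_kronecker [Fintype mA'] (M : κ → Matrix mA' mA ℂ)
    (X : Matrix mA' mA' ℂ) (Y : Matrix mB mB ℂ) :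
    krausDual (localKraus mB M) (X ⊗ₖ Y) = krausDual M X ⊗ₖ Y := by
  simp only [krausDual, localKraus, conjTranspose_kronecker, conjTranspose_one,
    ← mul_kronecker_mul, Matrix.mul_one, Matrix.one_mul, sum_kronecker]

variable [DecidableEq mA] [Fintype mA'] [DecidableEq mA'] {M : κ → Matrix mA' mA ℂ}

lemma krausDual_localKraus_one (hM : krausDual M 1 = 1) :
    krausDual (localKraus mB M) 1 = 1 := by
  rw [← one_kronecker_one, krausDual_localKraus_kronecker, hM, one_kronecker_one]

variable [Fintype mA]

lemma krausMap_localKraus_one_le (hM : krausMap M 1 ≤ 1) :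
    krausMap (localKraus mB M) 1 ≤ 1 := by
  have h := (le_iff.1 hM).kronecker (PosSemidef.one (n := mB) (R := ℂ))
  have hsub : ((1 : Matrix mA' mA' ℂ) - krausMap M 1) ⊗ₖ (1 : Matrix mB mB ℂ) =
      (1 : Matrix mA' mA' ℂ) ⊗ₖ (1 : Matrix mB mB ℂ) - krausMap M 1 ⊗ₖ (1 : Matrix mB mB ℂ) := by
    ext i j
    simp only [kroneckerMap_apply, Matrix.sub_apply, sub_mul]
  rwa [hsub, one_kronecker_one, ← krausMap_localKraus_kronecker, one_kronecker_one,
    ← le_iff] at h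

lemma ptraceFst_krausMap_localKraus (hM : krausDual M 1 = 1)
    (ρ : Matrix (mA × mB) (mA × mB) ℂ) :
    ptraceFst (krausMap (localKraus mB M) ρ) = ptraceFst ρ := by
  refine ext_iff_trace_mul_right.2 fun Y => ?_
  rw [← trace_mul_one_kronecker, trace_krausMap_mul, krausDual_localKraus_kronecker, hM,
    trace_mul_one_kronecker]

lemma isDensity_krausMap_localKraus (hM : krausDual M 1 = 1)
    {ρ : Matrix (mA × mB) (mA × mB) ℂ} (hρ : IsDensity ρ) :
    IsDensity (krausMap (localKraus mB M) ρ) :=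
  ⟨krausMap_posSemidef _ hρ.1, (trace_krausMap (krausDual_localKraus_one hM) ρ).trans hρ.2⟩

end LocalKrausMap

section TraceFunctional

variable {mA mA' mB κ : Type*} [Fintype mA] [DecidableEq mA] [Fintype mA'] [DecidableEq mA']
  [Fintype mB] [DecidableEq mB] [Fintype κ]
  {α z : ℝ} {M : κ → Matrix mA' mA ℂ} {ρ : Matrix (mA × mB) (mA × mB) ℂ}

/-- The operator on `H_B` that `Qfun` sandwiches between two powers of `ρ_AB`, as a function of the
marginal `r = ρ_B` and of the optimization variable `τ`. -/
noncomputable def marginalWeight (α z lam : ℝ) (r τ : Matrix mB mB ℂ) : Matrix mB mB ℂ :=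
  matPow r ((1 - lam) * (1 - α) / (2 * z)) * matPow τ (lam * (1 - α) / z) *
    matPow r ((1 - lam) * (1 - α) / (2 * z))

lemma marginalWeight_posSemidef (α z lam : ℝ) (r τ : Matrix mB mB ℂ) :
    (marginalWeight α z lam r τ).PosSemidef := by
  have h := (matPow_posSemidef τ (lam * (1 - α) / z)).mul_mul_conjTranspose_same
    (matPow r ((1 - lam) * (1 - α) / (2 * z)))
  rwa [(matPow_isHermitian r _).eq] at h

lemma exists_marginalWeight_eq (α z lam : ℝ) (r τ : Matrix mB mB ℂ) :
    ∃ y : Matrix mB mB ℂ, marginalWeight α z lam r τ = yᴴ * y :=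
  CStarAlgebra.nonneg_iff_eq_star_mul_self.1 (marginalWeight_posSemidef α z lam r τ).nonneg

lemma Qfun_eq_re_trace_matPow (α z lam : ℝ) (ρ : Matrix (mA × mB) (mA × mB) ℂ)
    {τ y : Matrix mB mB ℂ} (hy : marginalWeight α z lam (ptraceFst ρ) τ = yᴴ * y) :
    Qfun α z lam ρ τ = (matPow (((1 : Matrix mA mA ℂ) ⊗ₖ y) * matPow ρ (α / z) *
      ((1 : Matrix mA mA ℂ) ⊗ₖ y)ᴴ) z).trace.re := by
  set K := (1 : Matrix mA mA ℂ) ⊗ₖ y with hK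
  set R := matPow ρ (α / (2 * z)) with hR
  have hRstar : Rᴴ = R := (matPow_isHermitian ρ _).eq
  have hRR : R * R = matPow ρ (α / z) := by
    rw [hR, matPow_mul_matPow]
    congr 1
    ring
  have hKK : Kᴴ * K = (1 : Matrix mA mA ℂ) ⊗ₖ marginalWeight α z lam (ptraceFst ρ) τ := by
    rw [hy, hK, conjTranspose_one_kronecker_mul_self]
  have hinner : (K * R)ᴴ * (K * R) =
      R * ((1 : Matrix mA mA ℂ) ⊗ₖ marginalWeight α z lam (ptraceFst ρ) τ) * R := by
    rw [conjTranspose_mul, hRstar, ← hKK]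
    simp only [Matrix.mul_assoc]
  have houter : (K * R) * (K * R)ᴴ = K * matPow ρ (α / z) * Kᴴ := by
    rw [conjTranspose_mul, hRstar, ← hRR]
    simp only [Matrix.mul_assoc]
  rw [← houter, ← trace_matPow_conjTranspose_mul_self_comm, hinner]
  rfl

lemma Qfun_le_krausMap (hM1 : krausDual M 1 = 1) (hM : krausMap M 1 ≤ 1) (hρ : ρ.PosSemidef)
    (hα : α ∈ Set.Ioc 0 1) (hz : α ≤ z) (lam : ℝ) (τ : Matrix mB mB ℂ) :
    Qfun α z lam ρ τ ≤ Qfun α z lam (krausMap (localKraus mB M) ρ) τ := by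
  obtain ⟨y, hy⟩ := exists_marginalWeight_eq α z lam (ptraceFst ρ) τ
  have hz0 : 0 < z := hα.1.trans_le hz
  rw [Qfun_eq_re_trace_matPow α z lam ρ hy,
    Qfun_eq_re_trace_matPow α z lam _ (by rwa [ptraceFst_krausMap_localKraus hM1])]
  exact re_trace_matPow_le_krausMap (krausDual_localKraus_one hM1) (krausMap_localKraus_one_le hM)
    (localKraus_mul_one_kronecker M y) hρ ⟨div_pos hα.1 hz0, (div_le_one hz0).2 hz⟩ hz0
    ((div_mul_cancel₀ α hz0.ne').trans_le hα.2)

lemma krausMap_Qfun_le (hM1 : krausDual M 1 = 1) (hM : krausMap M 1 ≤ 1) (hρ : ρ.PosSemidef)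
    (hα : 1 ≤ α) (hz : z ≤ α) (hαz : α ≤ 2 * z) (lam : ℝ) (τ : Matrix mB mB ℂ) :
    Qfun α z lam (krausMap (localKraus mB M) ρ) τ ≤ Qfun α z lam ρ τ := by
  obtain ⟨y, hy⟩ := exists_marginalWeight_eq α z lam (ptraceFst ρ) τ
  have hz0 : 0 < z := by linarith
  rw [Qfun_eq_re_trace_matPow α z lam ρ hy,
    Qfun_eq_re_trace_matPow α z lam _ (by rwa [ptraceFst_krausMap_localKraus hM1])]
  exact krausMap_re_trace_matPow_le (krausDual_localKraus_one hM1) (krausMap_localKraus_one_le hM)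
    (localKraus_mul_one_kronecker M y) hρ ⟨(one_le_div hz0).2 hz, (div_le_iff₀ hz0).2 hαz⟩ hz0
    (hα.trans_eq (div_mul_cancel₀ α hz0.ne').symm)

end TraceFunctional

section PowerComparison

variable {n : Type*} [Fintype n] [DecidableEq n] {A W τ r : Matrix n n ℂ} {t z : ℝ}

lemma exists_pos_smul_matPow_le (A : Matrix n n ℂ) (s t : ℝ) :
    ∃ c : ℝ, 0 < c ∧ c • matPow A s ≤ matPow A t := by
  have hsmall : ∀ x ∈ spectrum ℝ A, ∀ᶠ c in nhdsWithin (0 : ℝ) (Set.Ioi 0),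
      c * truncPow s x ≤ truncPow t x := fun x _ => by
    rcases le_or_gt x 0 with hx | hx
    · simp only [truncPow, if_neg hx.not_gt, mul_zero, le_refl, Filter.eventually_true]
    · simp only [truncPow_of_pos hx, ← le_div_iff₀ (Real.rpow_pos_of_pos hx s)]
      filter_upwards [Ioc_mem_nhdsGT (show 0 < x ^ t / x ^ s by positivity)] with c hc using hc.2
  obtain ⟨c, hc, hc0⟩ := (((Filter.eventually_all_finite A.finite_real_spectrum).2 hsmall).and
    self_mem_nhdsWithin).exists
  refine ⟨c, hc0, ?_⟩
  rw [matPow_eq_cfc, matPow_eq_cfc, ← cfc_smul c _ A (continuousOn_spectrum_real A _)]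
  exact cfc_mono hc (continuousOn_spectrum_real A _) (continuousOn_spectrum_real A _)

lemma matPow_zero_of_posDef (hA : A.PosDef) : matPow A 0 = 1 := by
  rw [matPow_eq_cfc, ← cfc_const_one ℝ A hA.1.isSelfAdjoint]
  refine cfc_congr fun x hx => ?_
  rw [hA.1.spectrum_real_eq_range_eigenvalues] at hx
  obtain ⟨i, rfl⟩ := hx
  rw [truncPow_of_pos (hA.eigenvalues_pos i), Real.rpow_zero]

lemma re_trace_matPow_eq_sum (hW : W.PosSemidef) (hz : z ≠ 0) :
    (matPow W z).trace.re = ∑ i, hW.1.eigenvalues i ^ z := by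
  rw [matPow_eq_cfc_rpow hW hz, trace_cfc hW.1, Complex.ofReal_re]

lemma re_trace_matPow_le_card_mul (hW : W.PosSemidef) (hz : 0 < z) :
    (matPow W z).trace.re ≤ Fintype.card n * W.trace.re ^ z := by
  have htrace : W.trace.re = ∑ i, hW.1.eigenvalues i := by
    simpa only [matPow_one hW, Real.rpow_one] using re_trace_matPow_eq_sum hW one_ne_zero
  rw [re_trace_matPow_eq_sum hW hz.ne', htrace, ← nsmul_eq_mul]
  refine Finset.sum_le_card_nsmul _ _ _ fun i hi => ?_
  exact Real.rpow_le_rpow (hW.eigenvalues_nonneg i)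
    (Finset.single_le_sum (fun j _ => hW.eigenvalues_nonneg j) hi) hz.le

lemma rpow_re_trace_div_card_le (hW : W.PosSemidef) (hz : 0 < z) :
    (W.trace.re / Fintype.card n) ^ z ≤ (matPow W z).trace.re := by
  have hnonneg := re_trace_nonneg (matPow_posSemidef W z)
  have hroot : W.trace.re ≤ Fintype.card n * (matPow W z).trace.re ^ z⁻¹ := by
    have h := re_trace_matPow_le_card_mul (matPow_posSemidef W z) (inv_pos.2 hz)
    rwa [matPow_matPow hW.1, mul_inv_cancel₀ hz.ne', matPow_one hW] at h
  calc (W.trace.re / Fintype.card n) ^ z ≤ ((matPow W z).trace.re ^ z⁻¹) ^ z := by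
        have hW0 := re_trace_nonneg hW
        gcongr
        exact div_le_of_le_mul₀ (by positivity) (by positivity) (hroot.trans_eq (mul_comm _ _))
    _ = (matPow W z).trace.re := Real.rpow_inv_rpow hnonneg hz.ne'

lemma spectrum_le_one_of_isDensity (hτ : IsDensity τ) {x : ℝ} (hx : x ∈ spectrum ℝ τ) :
    x ≤ 1 := by
  rw [hτ.1.1.spectrum_real_eq_range_eigenvalues] at hx
  obtain ⟨i, rfl⟩ := hx
  have hsum : ∑ j, hτ.1.1.eigenvalues j = 1 := by
    have h := re_trace_matPow_eq_sum hτ.1 one_ne_zero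
    simpa only [matPow_one hτ.1, Real.rpow_one, hτ.2, Complex.one_re] using h.symm
  exact hsum ▸ Finset.single_le_sum (fun j _ => hτ.1.eigenvalues_nonneg j) (Finset.mem_univ i)

lemma matPow_le_one_of_isDensity (hτ : IsDensity τ) (ht : 0 ≤ t) : matPow τ t ≤ 1 := by
  rw [matPow_eq_cfc]
  refine cfc_le_one _ _ fun x hx => ?_
  rcases le_or_gt x 0 with hx0 | hx0
  · exact (if_neg hx0.not_gt).trans_le zero_le_one
  · exact (truncPow_of_pos hx0 t).trans_le
      (Real.rpow_le_one hx0.le (spectrum_le_one_of_isDensity hτ hx) ht)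

lemma one_le_re_trace_matPow_of_isDensity (hτ : IsDensity τ) (ht : t ≤ 0) :
    1 ≤ (matPow τ t).trace.re := by
  have hle : τ ≤ matPow τ t := by
    nth_rw 1 [← matPow_one hτ.1]
    rw [matPow_eq_cfc, matPow_eq_cfc]
    refine cfc_mono (fun x hx => ?_) (continuousOn_spectrum_real τ _)
      (continuousOn_spectrum_real τ _)
    rcases le_or_gt x 0 with hx0 | hx0
    · simp only [truncPow, if_neg hx0.not_gt, le_refl]
    · rw [truncPow_of_pos hx0, truncPow_of_pos hx0]
      exact Real.rpow_le_rpow_of_exponent_ge hx0 (spectrum_le_one_of_isDensity hτ hx) (by linarith)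
  have h := re_trace_mono hle
  rwa [hτ.2, Complex.one_re] at h

lemma re_trace_matPow_pos_of_isDensity (hr : IsDensity r) (t : ℝ) :
    0 < (matPow r t).trace.re := by
  obtain ⟨c, hc, hle⟩ := exists_pos_smul_matPow_le r 1 t
  have h := re_trace_mono hle
  rw [matPow_one hr.1, trace_smul, hr.2, Complex.real_smul, mul_one, Complex.ofReal_re] at h
  exact hc.trans_le h

lemma exists_isDensity_mul_eq_zero (hr : r.PosSemidef) (hdef : ¬ r.PosDef) :
    ∃ τ, IsDensity τ ∧ r * τ = 0 := by
  obtain ⟨v, hv, hrv⟩ := exists_mulVec_eq_zero_iff.2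
    (not_not.1 (mt hr.posDef_iff_det_ne_zero.2 hdef))
  have hnorm : 0 < star v ⬝ᵥ v := dotProduct_star_self_pos_iff.2 hv
  refine ⟨(star v ⬝ᵥ v)⁻¹ • vecMulVec v (star v),
    ⟨(posSemidef_vecMulVec_self_star v).smul (inv_pos.2 hnorm).le, ?_⟩, ?_⟩
  · rw [trace_smul, trace_vecMulVec, dotProduct_comm v, smul_eq_mul, inv_mul_cancel₀ hnorm.ne']
  · rw [Matrix.mul_smul, mul_vecMulVec, hrv, zero_vecMulVec, smul_zero]

end PowerComparison

section ReferenceFunctional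

variable {mA mB : Type*} [Fintype mA] [DecidableEq mA] [Fintype mB] [DecidableEq mB]
  {α z lam : ℝ} {r τ : Matrix mB mB ℂ} {ρ : Matrix (mA × mB) (mA × mB) ℂ}

/-- The quantity `Tr[ρ_B^{1 + (1−λ)(1−α)/z} τ^{λ(1−α)/z}]` for `r = ρ_B`. For fixed `ρ_AB`, its
`z`-th power is comparable with `Qfun` up to constants that do not depend on `τ`. -/
noncomputable def marginalQ (α z lam : ℝ) (r τ : Matrix mB mB ℂ) : ℝ :=
  (matPow r (1 + (1 - lam) * (1 - α) / z) * matPow τ (lam * (1 - α) / z)).trace.re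

lemma marginalQ_eq_re_trace_mul_marginalWeight (α z lam : ℝ) (hr : r.PosSemidef)
    (τ : Matrix mB mB ℂ) :
    marginalQ α z lam r τ = (r * marginalWeight α z lam r τ).trace.re := by
  set b := (1 - lam) * (1 - α) / (2 * z) with hb
  have hpow : matPow r (1 + (1 - lam) * (1 - α) / z) = matPow r b * r * matPow r b := by
    nth_rw 3 [← matPow_one hr]
    rw [matPow_mul_matPow, matPow_mul_matPow, hb]
    congr 1
    ring
  rw [marginalQ, marginalWeight, hpow, ← hb]
  simp only [Matrix.mul_assoc]
  rw [trace_mul_comm]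
  simp only [Matrix.mul_assoc]

lemma marginalQ_nonneg (α z lam : ℝ) (r τ : Matrix mB mB ℂ) : 0 ≤ marginalQ α z lam r τ := by
  simpa only [marginalQ, Matrix.mul_zero, trace_zero, Complex.zero_re] using
    re_trace_mul_mono (matPow_posSemidef r _) (matPow_posSemidef τ (lam * (1 - α) / z)).nonneg

lemma marginalQ_le_of_isDensity (hs : 0 ≤ lam * (1 - α) / z) (r : Matrix mB mB ℂ)
    (hτ : IsDensity τ) :
    marginalQ α z lam r τ ≤ (matPow r (1 + (1 - lam) * (1 - α) / z)).trace.re := by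
  simpa only [marginalQ, Matrix.mul_one] using
    re_trace_mul_mono (matPow_posSemidef r _) (matPow_le_one_of_isDensity hτ hs)

lemma marginalQ_self_pos (α z lam : ℝ) (hr : IsDensity r) : 0 < marginalQ α z lam r r := by
  rw [marginalQ, matPow_mul_matPow]
  exact re_trace_matPow_pos_of_isDensity hr _

lemma exists_pos_le_marginalQ (hs : lam * (1 - α) / z ≤ 0) (hr : r.PosDef) :
    ∃ g : ℝ, 0 < g ∧ ∀ τ, IsDensity τ → g ≤ marginalQ α z lam r τ := by
  obtain ⟨g, hg, hle⟩ := exists_pos_smul_matPow_le r 0 (1 + (1 - lam) * (1 - α) / z)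
  rw [matPow_zero_of_posDef hr] at hle
  refine ⟨g, hg, fun τ hτ => ?_⟩
  calc g ≤ g * (matPow τ (lam * (1 - α) / z)).trace.re :=
        le_mul_of_one_le_right hg.le (one_le_re_trace_matPow_of_isDensity hτ hs)
    _ = (matPow τ (lam * (1 - α) / z) * g • (1 : Matrix mB mB ℂ)).trace.re := by
        rw [Matrix.mul_smul, Matrix.mul_one, trace_smul, Complex.smul_re, smul_eq_mul]
    _ ≤ marginalQ α z lam r τ := by
        rw [marginalQ, trace_mul_comm (matPow r _)]
        exact re_trace_mul_mono (matPow_posSemidef τ _) hle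

lemma matPow_mul_eq_zero (hr : r.PosSemidef) (t : ℝ) (h : r * τ = 0) : matPow r t * τ = 0 := by
  refine ext_of_mulVec_single fun j => ?_
  rw [← mulVec_mulVec, zero_mulVec, matPow_mulVec_eq_zero_iff hr, mulVec_mulVec, h, zero_mulVec]

lemma exists_marginalQ_eq_zero (α z lam : ℝ) (hr : r.PosSemidef) (hdef : ¬ r.PosDef) :
    ∃ τ, IsDensity τ ∧ marginalQ α z lam r τ = 0 := by
  obtain ⟨τ, hτ, hrτ⟩ := exists_isDensity_mul_eq_zero hr hdef
  have hsplit : matPow τ (lam * (1 - α) / z) = τ * matPow τ (lam * (1 - α) / z - 1) := by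
    nth_rw 2 [← matPow_one hτ.1]
    rw [matPow_mul_matPow, add_sub_cancel]
  refine ⟨τ, hτ, ?_⟩
  rw [marginalQ, hsplit, ← Matrix.mul_assoc, matPow_mul_eq_zero hr _ hrτ, Matrix.zero_mul,
    trace_zero, Complex.zero_re]

end ReferenceFunctional

section Comparison

variable {mA mB : Type*} [Fintype mA] [DecidableEq mA] [Fintype mB] [DecidableEq mB]
  {z : ℝ} {τ y : Matrix mB mB ℂ} {ρ : Matrix (mA × mB) (mA × mB) ℂ}

lemma exists_pos_mul_re_trace_matPow_mul_le {n : Type*} [Fintype n] [DecidableEq n]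
    (A : Matrix n n ℂ) (s t : ℝ) :
    ∃ c : ℝ, 0 < c ∧ ∀ X : Matrix n n ℂ, X.PosSemidef →
      c * (matPow A s * X).trace.re ≤ (matPow A t * X).trace.re := by
  obtain ⟨c, hc, hle⟩ := exists_pos_smul_matPow_le A s t
  refine ⟨c, hc, fun X hX => ?_⟩
  have h := re_trace_mul_mono hX hle
  rwa [Matrix.mul_smul, trace_smul, Complex.smul_re, smul_eq_mul, trace_mul_comm X,
    trace_mul_comm X] at h

lemma re_trace_matPow_one_mul_eq_marginalQ (α z lam : ℝ) (hρ : ρ.PosSemidef)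
    (hy : marginalWeight α z lam (ptraceFst ρ) τ = yᴴ * y) :
    (matPow ρ 1 * ((1 : Matrix mA mA ℂ) ⊗ₖ (yᴴ * y))).trace.re =
      marginalQ α z lam (ptraceFst ρ) τ := by
  rw [marginalQ_eq_re_trace_mul_marginalWeight α z lam (ptraceFst_posSemidef hρ), matPow_one hρ,
    trace_mul_one_kronecker, hy]

lemma exists_Qfun_le_mul_marginalQ_rpow (hz : 0 < z) (hρ : ρ.PosSemidef) (α lam : ℝ) :
    ∃ C : ℝ, 0 ≤ C ∧ ∀ τ, Qfun α z lam ρ τ ≤ C * marginalQ α z lam (ptraceFst ρ) τ ^ z := by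
  obtain ⟨c, hc, hle⟩ := exists_pos_mul_re_trace_matPow_mul_le ρ (α / z) 1
  refine ⟨Fintype.card (mA × mB) * c⁻¹ ^ z, by positivity, fun τ => ?_⟩
  obtain ⟨y, hy⟩ := exists_marginalWeight_eq α z lam (ptraceFst ρ) τ
  have hW := (matPow_posSemidef ρ (α / z)).mul_mul_conjTranspose_same ((1 : Matrix mA mA ℂ) ⊗ₖ y)
  have htrace := hle _ (PosSemidef.one.kronecker (posSemidef_conjTranspose_mul_self y))
  rw [re_trace_matPow_one_mul_eq_marginalQ α z lam hρ hy, ← trace_one_kronecker_conj,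
    ← le_inv_mul_iff₀ hc] at htrace
  rw [Qfun_eq_re_trace_matPow α z lam ρ hy, mul_assoc (Fintype.card _ : ℝ),
    ← Real.mul_rpow (inv_pos.2 hc).le (marginalQ_nonneg α z lam _ τ)]
  refine (re_trace_matPow_le_card_mul hW hz).trans ?_
  have hW0 := re_trace_nonneg hW
  gcongr

lemma exists_mul_marginalQ_rpow_le_Qfun (hz : 0 < z) (hρ : IsDensity ρ) (α lam : ℝ) :
    ∃ c : ℝ, 0 < c ∧ ∀ τ, (c * marginalQ α z lam (ptraceFst ρ) τ) ^ z ≤ Qfun α z lam ρ τ := by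
  obtain ⟨c, hc, hle⟩ := exists_pos_mul_re_trace_matPow_mul_le ρ 1 (α / z)
  have hne : Nonempty (mA × mB) := by
    by_contra hempty
    rw [not_nonempty_iff] at hempty
    exact zero_ne_one ((trace_eq_zero_of_isEmpty ρ).symm.trans hρ.2)
  have hcard : (0 : ℝ) < Fintype.card (mA × mB) := Nat.cast_pos.2 Fintype.card_pos
  refine ⟨c / Fintype.card (mA × mB), div_pos hc hcard, fun τ => ?_⟩
  obtain ⟨y, hy⟩ := exists_marginalWeight_eq α z lam (ptraceFst ρ) τ
  have hW := (matPow_posSemidef ρ (α / z)).mul_mul_conjTranspose_same ((1 : Matrix mA mA ℂ) ⊗ₖ y)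
  have htrace := hle _ (PosSemidef.one.kronecker (posSemidef_conjTranspose_mul_self y))
  rw [re_trace_matPow_one_mul_eq_marginalQ α z lam hρ.1 hy, ← trace_one_kronecker_conj] at htrace
  rw [Qfun_eq_re_trace_matPow α z lam ρ hy, div_mul_eq_mul_div]
  refine le_trans ?_ (rpow_re_trace_div_card_le hW hz)
  have hq := marginalQ_nonneg α z lam (ptraceFst ρ) τ
  gcongr

end Comparison

section OptimizedFunctional

variable {mA mA' mB : Type*} [Fintype mA] [DecidableEq mA] [Fintype mA'] [DecidableEq mA']
  [Fintype mB] [DecidableEq mB] {α z lam : ℝ} {ρ : Matrix (mA × mB) (mA × mB) ℂ}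
  {σ : Matrix (mA' × mB) (mA' × mB) ℂ}

lemma Qfun_nonneg (α z lam : ℝ) (ρ : Matrix (mA × mB) (mA × mB) ℂ) (τ : Matrix mB mB ℂ) :
    0 ≤ Qfun α z lam ρ τ :=
  re_trace_nonneg (matPow_posSemidef _ z)

lemma bddBelow_Qfun (α z lam : ℝ) (ρ : Matrix (mA × mB) (mA × mB) ℂ) :
    BddBelow {x | ∃ τ : Matrix mB mB ℂ, IsDensity τ ∧ x = Qfun α z lam ρ τ} :=
  ⟨0, by rintro _ ⟨τ, -, rfl⟩; exact Qfun_nonneg α z lam ρ τ⟩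

lemma bddAbove_Qfun (hz : 0 < z) (hlam : 0 ≤ lam * (1 - α)) (hρ : ρ.PosSemidef) :
    BddAbove {x | ∃ τ : Matrix mB mB ℂ, IsDensity τ ∧ x = Qfun α z lam ρ τ} := by
  obtain ⟨C, hC, hle⟩ := exists_Qfun_le_mul_marginalQ_rpow hz hρ α lam
  refine ⟨C * (matPow (ptraceFst ρ) (1 + (1 - lam) * (1 - α) / z)).trace.re ^ z, ?_⟩
  rintro _ ⟨τ, hτ, rfl⟩
  refine (hle τ).trans (mul_le_mul_of_nonneg_left ?_ hC)
  exact Real.rpow_le_rpow (marginalQ_nonneg α z lam _ τ)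
    (marginalQ_le_of_isDensity (div_nonneg hlam hz.le) _ hτ) hz.le

lemma nonempty_Qfun (α z lam : ℝ) (hρ : IsDensity ρ) :
    {x | ∃ τ : Matrix mB mB ℂ, IsDensity τ ∧ x = Qfun α z lam ρ τ}.Nonempty :=
  ⟨_, ptraceFst ρ, isDensity_ptraceFst hρ, rfl⟩

lemma Qopt_nonneg (α z lam : ℝ) (ρ : Matrix (mA × mB) (mA × mB) ℂ) : 0 ≤ Qopt α z lam ρ := by
  rw [Qopt]
  split_ifs
  · exact Real.sSup_nonneg (by rintro _ ⟨τ, -, rfl⟩; exact Qfun_nonneg α z lam ρ τ)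
  · exact Real.sInf_nonneg (by rintro _ ⟨τ, -, rfl⟩; exact Qfun_nonneg α z lam ρ τ)

lemma Qopt_mono (hz : 0 < z) (hρ : IsDensity ρ) (hσ : IsDensity σ)
    (h : ∀ τ, Qfun α z lam ρ τ ≤ Qfun α z lam σ τ) : Qopt α z lam ρ ≤ Qopt α z lam σ := by
  rw [Qopt, Qopt]
  split_ifs with hlam
  · refine csSup_le (nonempty_Qfun α z lam hρ) ?_
    rintro _ ⟨τ, hτ, rfl⟩
    exact (h τ).trans (le_csSup (bddAbove_Qfun hz hlam hσ.1) ⟨τ, hτ, rfl⟩)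
  · refine le_csInf (nonempty_Qfun α z lam hσ) ?_
    rintro _ ⟨τ, hτ, rfl⟩
    exact (csInf_le (bddBelow_Qfun α z lam ρ) ⟨τ, hτ, rfl⟩).trans (h τ)

lemma Qopt_pos_of_nonneg (hz : 0 < z) (hlam : 0 ≤ lam * (1 - α)) (hρ : IsDensity ρ) :
    0 < Qopt α z lam ρ := by
  obtain ⟨c, hc, hle⟩ := exists_mul_marginalQ_rpow_le_Qfun hz hρ α lam
  have hr := isDensity_ptraceFst hρ
  rw [Qopt, if_pos hlam]
  calc 0 < (c * marginalQ α z lam (ptraceFst ρ) (ptraceFst ρ)) ^ z :=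
        Real.rpow_pos_of_pos (mul_pos hc (marginalQ_self_pos α z lam hr)) z
    _ ≤ Qfun α z lam ρ (ptraceFst ρ) := hle _
    _ ≤ _ := le_csSup (bddAbove_Qfun hz hlam hρ.1) ⟨_, hr, rfl⟩

lemma Qopt_pos_of_posDef (hz : 0 < z) (hlam : lam * (1 - α) < 0) (hρ : IsDensity ρ)
    (hdef : (ptraceFst ρ).PosDef) : 0 < Qopt α z lam ρ := by
  obtain ⟨c, hc, hle⟩ := exists_mul_marginalQ_rpow_le_Qfun hz hρ α lam
  obtain ⟨g, hg, hgle⟩ :=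
    exists_pos_le_marginalQ (div_nonpos_of_nonpos_of_nonneg hlam.le hz.le) hdef
  rw [Qopt, if_neg hlam.not_ge]
  refine (Real.rpow_pos_of_pos (mul_pos hc hg) z).trans_le
    (le_csInf (nonempty_Qfun α z lam hρ) ?_)
  rintro _ ⟨τ, hτ, rfl⟩
  refine le_trans ?_ (hle τ)
  gcongr
  exact hgle τ hτ

lemma Qopt_eq_zero_of_not_posDef (hz : 0 < z) (hlam : lam * (1 - α) < 0) (hρ : ρ.PosSemidef)
    (hdef : ¬ (ptraceFst ρ).PosDef) : Qopt α z lam ρ = 0 := by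
  obtain ⟨C, -, hle⟩ := exists_Qfun_le_mul_marginalQ_rpow hz hρ α lam
  obtain ⟨τ, hτ, hzero⟩ := exists_marginalQ_eq_zero α z lam (ptraceFst_posSemidef hρ) hdef
  refine le_antisymm ?_ (Qopt_nonneg α z lam ρ)
  rw [Qopt, if_neg hlam.not_ge]
  calc _ ≤ Qfun α z lam ρ τ := csInf_le (bddBelow_Qfun α z lam ρ) ⟨τ, hτ, rfl⟩
    _ ≤ C * marginalQ α z lam (ptraceFst ρ) τ ^ z := hle τ
    _ = 0 := by rw [hzero, Real.zero_rpow hz.ne', mul_zero]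

lemma Qopt_pos_iff (hz : 0 < z) (hρ : IsDensity ρ) :
    0 < Qopt α z lam ρ ↔ 0 ≤ lam * (1 - α) ∨ (ptraceFst ρ).PosDef := by
  rcases le_or_gt 0 (lam * (1 - α)) with hlam | hlam
  · exact iff_of_true (Qopt_pos_of_nonneg hz hlam hρ) (Or.inl hlam)
  · rw [or_iff_right hlam.not_ge]
    refine ⟨fun hpos => ?_, Qopt_pos_of_posDef hz hlam hρ⟩
    by_contra hdef
    exact hpos.ne' (Qopt_eq_zero_of_not_posDef hz hlam hρ.1 hdef)

/- `Real.log 0 = 0` would break monotonicity, so it matters that the optimized functional vanishes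
for both states or for neither: whether it does depends only on their common marginal. -/
lemma log_Qopt_mono (hz : 0 < z) (hρ : IsDensity ρ) (hσ : IsDensity σ)
    (hmarg : ptraceFst ρ = ptraceFst σ) (h : ∀ τ, Qfun α z lam ρ τ ≤ Qfun α z lam σ τ) :
    Real.log (Qopt α z lam ρ) ≤ Real.log (Qopt α z lam σ) := by
  rcases (Qopt_nonneg α z lam ρ).eq_or_lt with hzero | hpos
  · have hσzero : ¬ 0 < Qopt α z lam σ := by
      rw [Qopt_pos_iff hz hσ, ← hmarg, ← Qopt_pos_iff hz hρ]
      exact hzero.not_lt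
    rw [← hzero, ← (Qopt_nonneg α z lam σ).eq_of_not_lt hσzero]
  · exact Real.log_le_log hpos (Qopt_mono hz hρ hσ h)

end OptimizedFunctional

theorem stmt11_general {mA mA' mB κ : Type*}
    [Fintype mA] [DecidableEq mA] [Fintype mA'] [DecidableEq mA']
    [Fintype mB] [DecidableEq mB] [Fintype κ] (α z lam : ℝ)
    (hαz : 0 < α ∧ α < 1 ∧ α ≤ z ∨ 1 < α ∧ z ≤ α ∧ α ≤ 2 * z)
    (ρ : Matrix (mA × mB) (mA × mB) ℂ) (hρ : IsDensity ρ)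
    (M : κ → Matrix mA' mA ℂ)
    (hM1 : ∑ k, (M k)ᴴ * M k = (1 : Matrix mA mA ℂ))
    (hM2 : ((1 : Matrix mA' mA' ℂ) - ∑ k, M k * (M k)ᴴ).PosSemidef)
    (σ : Matrix (mA' × mB) (mA' × mB) ℂ)
    (hσ : σ = ∑ k, (M k ⊗ₖ (1 : Matrix mB mB ℂ)) * ρ * (M k ⊗ₖ (1 : Matrix mB mB ℂ))ᴴ) :
    Hcond α z lam ρ ≤ Hcond α z lam σ := by
  obtain rfl : σ = krausMap (localKraus mB M) ρ := hσ
  have hdual : krausDual M 1 = 1 := by simpa only [krausDual, Matrix.mul_one] using hM1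
  have hsub : krausMap M 1 ≤ 1 := by
    simpa only [krausMap, Matrix.mul_one] using le_iff.2 hM2
  have hσ := isDensity_krausMap_localKraus hdual hρ
  have hmarg := ptraceFst_krausMap_localKraus hdual ρ
  rcases hαz with ⟨hα0, hα1, hz⟩ | ⟨hα1, hz, hαz⟩
  · refine mul_le_mul_of_nonneg_left ?_ (one_div_nonneg.2 (by linarith))
    exact log_Qopt_mono (by linarith) hρ hσ hmarg.symm
      (Qfun_le_krausMap hdual hsub hρ.1 ⟨hα0, hα1.le⟩ hz lam)
  · refine mul_le_mul_of_nonpos_left ?_ (one_div_nonpos.2 (by linarith))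
    exact log_Qopt_mono (by linarith) hσ hρ hmarg
      (krausMap_Qfun_le hdual hsub hρ.1 hα1.le hz hαz lam)

/-- DPI under sub-unital channels on the first system: for `(α,z,λ) ∈ 𝒟`,
a state `ρ_AB` and a sub-unital quantum channel `{M_k}_k` in Kraus form from `H_A` to
`H_{A′}`, setting `σ_{A′B} = Σ_k (M_k ⊗ I_B) ρ_AB (M_k ⊗ I_B)†`, we have
`H^λ_{α,z}(A|B)_ρ ≤ H^λ_{α,z}(A′|B)_σ`. -/
theorem stmt11 {mA mA' mB κ : Type*}
    [Fintype mA] [DecidableEq mA] [Fintype mA'] [DecidableEq mA']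
    [Fintype mB] [DecidableEq mB] [Fintype κ]
    (α z lam : ℝ) (hD : memD α z lam)
    (ρ : Matrix (mA × mB) (mA × mB) ℂ) (hρ : IsDensity ρ)
    (M : κ → Matrix mA' mA ℂ)
    (hM1 : ∑ k, (M k)ᴴ * M k = (1 : Matrix mA mA ℂ))
    (hM2 : ((1 : Matrix mA' mA' ℂ) - ∑ k, M k * (M k)ᴴ).PosSemidef)
    (σ : Matrix (mA' × mB) (mA' × mB) ℂ)
    (hσ : σ = ∑ k, (M k ⊗ₖ (1 : Matrix mB mB ℂ)) * ρ * (M k ⊗ₖ (1 : Matrix mB mB ℂ))ᴴ) :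
    Hcond α z lam ρ ≤ Hcond α z lam σ :=
  stmt11_general α z lam (hD.imp (fun ⟨h0, h1, _, hz, _⟩ => ⟨h0, h1, hz⟩)
    fun ⟨h1, _, hz, hαz, _⟩ => ⟨h1, hz, hαz⟩) ρ hρ M hM1 hM2 σ hσ
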